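/- arXiv:1211.2224 — 4 statements merged into one kernel-verified Lean document; each statement's English description precedes it below -/
import Mathlib

section
/- Let Ω = (0,h₁)×(0,h₂) with h₁,h₂ > 0 and Γ = {0}×[0,h₂] (one side of the rectangle). Then the sharp constant C₁(Ω,Γ) in the inequality ‖w‖_{L²(Ω)} ≤ C₁‖∇w‖_{L²(Ω)} for all w ∈ H̃¹(Ω,Γ) is equal to (1/π)·max{2h₁, h₂}. -/
open MeasureTheory Real

lemma auxA_lt (f f' : ℝ → ℝ) (h a : ℝ) (hh : 0 < h) (ha : 0 < a) (hah : a * h < π / 2)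
    (hf : ∀ x, HasDerivAt f (f' x) x) (hc : Continuous f') (h0 : f 0 = 0) :
    a ^ 2 * ∫ x in (0:ℝ)..h, f x ^ 2 ≤ ∫ x in (0:ℝ)..h, f' x ^ 2 := by
  have hfc : Continuous f := continuous_iff_continuousAt.2 fun x => (hf x).continuousAt
  have hcos : ∀ x ∈ Set.uIcc 0 h, 0 < cos (a * (h - x)) := by
    intro x hx
    rw [Set.uIcc_of_le hh.le] at hx
    apply cos_pos_of_mem_Ioo
    constructor
    · nlinarith [hx.1, hx.2, pi_pos]
    · nlinarith [hx.1, hx.2, pi_pos]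
  let g : ℝ → ℝ := fun x => f' x ^ 2 - a ^ 2 * f x ^ 2
    - (f' x - a * (sin (a * (h - x)) / cos (a * (h - x))) * f x) ^ 2
  have hgc : ContinuousOn g (Set.uIcc 0 h) := by
    have h1 : ContinuousOn (fun x => sin (a * (h - x)) / cos (a * (h - x))) (Set.uIcc 0 h) := by
      apply ContinuousOn.div
      · fun_prop
      · fun_prop
      · intro x hx; exact (hcos x hx).ne'
    fun_prop
  have key : ∫ x in (0:ℝ)..h, g x =
      a * (sin (a * (h - h)) / cos (a * (h - h))) * f h ^ 2
      - a * (sin (a * (h - 0)) / cos (a * (h - 0))) * f 0 ^ 2 := by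
    refine intervalIntegral.integral_eq_sub_of_hasDerivAt
      (f := fun x => a * (sin (a * (h - x)) / cos (a * (h - x))) * f x ^ 2) ?_
      hgc.intervalIntegrable
    intro x hx
    have hx' := (hcos x hx).ne'
    have hin : HasDerivAt (fun x => a * (h - x)) (-a) x := by
      simpa using ((hasDerivAt_id x).const_sub h).const_mul a
    have := (((hin.sin.div hin.cos hx').const_mul a).mul ((hf x).pow 2))
    refine this.congr_deriv ?_
    simp only [g, Pi.div_apply, Pi.pow_apply]
    have hsc := sin_sq_add_cos_sq (a * (h - x))
    generalize sin (a * (h - x)) = S at *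
    generalize cos (a * (h - x)) = K at *
    field_simp
    ring
  have hz : ∫ x in (0:ℝ)..h, g x = 0 := by rw [key]; simp [h0]
  have hle : ∫ x in (0:ℝ)..h, g x ≤ ∫ x in (0:ℝ)..h, (f' x ^ 2 - a ^ 2 * f x ^ 2) := by
    apply intervalIntegral.integral_mono_on hh.le hgc.intervalIntegrable
    · exact Continuous.intervalIntegrable (by fun_prop) _ _
    · intro x _
      simp only [g]
      nlinarith [sq_nonneg (f' x - a * (sin (a * (h - x)) / cos (a * (h - x))) * f x)]
  rw [hz, intervalIntegral.integral_sub (Continuous.intervalIntegrable (by fun_prop) _ _)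
    (Continuous.intervalIntegrable (by fun_prop) _ _), intervalIntegral.integral_const_mul] at hle
  linarith

lemma auxA (f f' : ℝ → ℝ) (h : ℝ) (hh : 0 < h)
    (hf : ∀ x, HasDerivAt f (f' x) x) (hc : Continuous f') (h0 : f 0 = 0) :
    ∫ x in (0:ℝ)..h, f x ^ 2 ≤ (2 * h / π) ^ 2 * ∫ x in (0:ℝ)..h, f' x ^ 2 := by
  have hp := pi_pos
  have hk : (0:ℝ) < π / 2 / h := by positivity
  have h1 : (π / 2 / h) ^ 2 * ∫ x in (0:ℝ)..h, f x ^ 2 ≤ ∫ x in (0:ℝ)..h, f' x ^ 2 := by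
    have ht : Filter.Tendsto (fun a : ℝ => a ^ 2 * ∫ x in (0:ℝ)..h, f x ^ 2)
        (nhdsWithin (π / 2 / h) (Set.Iio (π / 2 / h)))
        (nhds ((π / 2 / h) ^ 2 * ∫ x in (0:ℝ)..h, f x ^ 2)) := by
      apply Filter.Tendsto.mono_left _ nhdsWithin_le_nhds
      exact Continuous.tendsto (by fun_prop) _
    refine le_of_tendsto ht ?_
    filter_upwards [Ioo_mem_nhdsLT hk] with a ha
    exact auxA_lt f f' h a hh ha.1 ((lt_div_iff₀ hh).1 ha.2) hf hc h0
  have h2 : (2 * h / π) ^ 2 * (π / 2 / h) ^ 2 = 1 := by field_simp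
  calc _ = (2 * h / π) ^ 2 * ((π / 2 / h) ^ 2 * ∫ x in (0:ℝ)..h, f x ^ 2) := by
        rw [← mul_assoc, h2, one_mul]
    _ ≤ _ := by gcongr

lemma auxB (f f' : ℝ → ℝ) (h : ℝ) (hh : 0 < h)
    (hf : ∀ x, HasDerivAt f (f' x) x) (hc : Continuous f') :
    ∫ x in (0:ℝ)..h, f x ^ 2 ≤ (∫ x in (0:ℝ)..h, f x) ^ 2 / h +
      (h / π) ^ 2 * ∫ x in (0:ℝ)..h, f' x ^ 2 := by
  have hfc : Continuous f := continuous_iff_continuousAt.2 fun x => (hf x).continuousAt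
  set c := f (h / 2) with hcdef
  have hR := auxA (fun x => f (h / 2 + x) - c) (fun x => f' (h / 2 + x)) (h / 2) (by positivity)
    (fun x => by
      simpa using ((hf (h / 2 + x)).comp_const_add (h / 2) x).sub_const c) (by fun_prop) (by simp [c])
  have hL := auxA (fun x => f (h / 2 - x) - c) (fun x => - f' (h / 2 - x)) (h / 2) (by positivity)
    (fun x => by
      simpa using ((hf (h / 2 - x)).comp_const_sub (h / 2) x).sub_const c) (by fun_prop) (by simp [c])
  simp only [neg_sq] at hL
  rw [intervalIntegral.integral_comp_add_left (fun x => (f x - c) ^ 2),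
    intervalIntegral.integral_comp_add_left (fun x => (f' x) ^ 2)] at hR
  rw [intervalIntegral.integral_comp_sub_left (fun x => (f x - c) ^ 2),
    intervalIntegral.integral_comp_sub_left (fun x => (f' x) ^ 2)] at hL
  simp only [add_zero, sub_zero, add_halves, sub_self] at hR hL
  have e : 2 * (h / 2) / π = h / π := by ring
  rw [e] at hR hL
  have s1 := intervalIntegral.integral_add_adjacent_intervals (μ := volume) (a := 0) (b := h / 2) (c := h)
    (f := fun x => (f x - c) ^ 2) (Continuous.intervalIntegrable (by fun_prop) _ _)
    (Continuous.intervalIntegrable (by fun_prop) _ _)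
  have s2 := intervalIntegral.integral_add_adjacent_intervals (μ := volume) (a := 0) (b := h / 2) (c := h)
    (f := fun x => (f' x) ^ 2) (Continuous.intervalIntegrable (by fun_prop) _ _)
    (Continuous.intervalIntegrable (by fun_prop) _ _)
  have hexp : ∫ x in (0:ℝ)..h, (f x - c) ^ 2 =
      (∫ x in (0:ℝ)..h, f x ^ 2) - 2 * c * (∫ x in (0:ℝ)..h, f x) + h * c ^ 2 := by
    have : ∀ x, (f x - c) ^ 2 = f x ^ 2 - 2 * c * f x + c ^ 2 := fun x => by ring
    simp only [this]
    rw [intervalIntegral.integral_add, intervalIntegral.integral_sub,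
      intervalIntegral.integral_const_mul]
    · simp
    all_goals exact Continuous.intervalIntegrable (by fun_prop) _ _
  set I := ∫ x in (0:ℝ)..h, f x
  have hq : 2 * c * I - h * c ^ 2 ≤ I ^ 2 / h := by
    rw [le_div_iff₀ hh]
    nlinarith [sq_nonneg (I - h * c)]
  rw [← s2, mul_add]
  linarith

lemma auxCS (g : ℝ → ℝ) (h : ℝ) (hh : 0 < h) (hg : Continuous g) :
    (∫ x in (0:ℝ)..h, g x) ^ 2 ≤ h * ∫ x in (0:ℝ)..h, g x ^ 2 := by
  set I := ∫ x in (0:ℝ)..h, g x with hI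
  have h0 : 0 ≤ ∫ x in (0:ℝ)..h, (h * g x - I) ^ 2 :=
    intervalIntegral.integral_nonneg hh.le fun x _ => sq_nonneg _
  have hexp : ∫ x in (0:ℝ)..h, (h * g x - I) ^ 2 =
      h ^ 2 * (∫ x in (0:ℝ)..h, g x ^ 2) - 2 * h * I * I + h * I ^ 2 := by
    have : ∀ x, (h * g x - I) ^ 2 = h ^ 2 * g x ^ 2 - 2 * h * I * g x + I ^ 2 := fun x => by ring
    simp only [this]
    rw [intervalIntegral.integral_add, intervalIntegral.integral_sub,
      intervalIntegral.integral_const_mul, intervalIntegral.integral_const_mul]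
    · simp [← hI]
    all_goals exact Continuous.intervalIntegrable (by fun_prop) _ _
  rw [hexp] at h0
  have : 0 ≤ h * (h * (∫ x in (0:ℝ)..h, g x ^ 2) - I ^ 2) := by linarith
  have := nonneg_of_mul_nonneg_right this hh
  linarith

lemma auxDeriv (U Ux : ℝ → ℝ → ℝ) (h : ℝ) (hU : Continuous (Function.uncurry U))
    (hUx : Continuous (Function.uncurry Ux))
    (hd : ∀ s t, HasDerivAt (fun s => U s t) (Ux s t) s) (s : ℝ) :
    HasDerivAt (fun s => ∫ t in (0:ℝ)..h, U s t) (∫ t in (0:ℝ)..h, Ux s t) s := by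
  have hU1 : ∀ s, Continuous (U s) := fun s => hU.comp (Continuous.prodMk_right s)
  have hU2 : ∀ s, Continuous (Ux s) := fun s => hUx.comp (Continuous.prodMk_right s)
  obtain ⟨M, hM⟩ := ((isCompact_Icc (a := s - 1) (b := s + 1)).prod
    (isCompact_uIcc (a := (0:ℝ)) (b := h))).exists_bound_of_continuousOn hUx.continuousOn
  refine (intervalIntegral.hasDerivAt_integral_of_dominated_loc_of_deriv_le
    (F := U) (F' := Ux) (bound := fun _ => M) (s := Set.Icc (s - 1) (s + 1))
    (Icc_mem_nhds (by linarith) (by linarith)) ?_ ((hU1 s).intervalIntegrable _ _)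
    (hU2 s).aestronglyMeasurable ?_ (by simp) ?_).2
  · exact Filter.Eventually.of_forall fun s => (hU1 s).aestronglyMeasurable
  · refine Filter.Eventually.of_forall fun t ht x hx => ?_
    exact hM (x, t) ⟨hx, Set.uIoc_subset_uIcc ht⟩
  · exact Filter.Eventually.of_forall fun t ht x hx => hd x t

lemma aux2D (U Ux Uy : ℝ → ℝ → ℝ) (h₁ h₂ : ℝ) (hh₁ : 0 < h₁) (hh₂ : 0 < h₂)
    (hU : Continuous (Function.uncurry U))
    (hUx : Continuous (Function.uncurry Ux)) (hUy : Continuous (Function.uncurry Uy))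
    (hdx : ∀ s t, HasDerivAt (fun s => U s t) (Ux s t) s)
    (hdy : ∀ s t, HasDerivAt (fun t => U s t) (Uy s t) t)
    (h0 : ∫ t in (0:ℝ)..h₂, U 0 t = 0) :
    ∫ s in (0:ℝ)..h₁, ∫ t in (0:ℝ)..h₂, U s t ^ 2 ≤ (π⁻¹ * max (2 * h₁) h₂) ^ 2 *
      ∫ s in (0:ℝ)..h₁, ∫ t in (0:ℝ)..h₂, (Ux s t ^ 2 + Uy s t ^ 2) := by
  have c1 : ∀ V : ℝ → ℝ → ℝ, Continuous (Function.uncurry V) → ∀ s, Continuous (V s) :=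
    fun V hV s => hV.comp (Continuous.prodMk_right s)
  have c2 : ∀ V : ℝ → ℝ → ℝ, Continuous (Function.uncurry V) →
      Continuous (fun s => ∫ t in (0:ℝ)..h₂, V s t) := fun V hV =>
    intervalIntegral.continuous_parametric_intervalIntegral_of_continuous' hV 0 h₂
  have c3 : ∀ V : ℝ → ℝ → ℝ, Continuous (Function.uncurry V) →
      Continuous (fun s => ∫ t in (0:ℝ)..h₂, V s t ^ 2) := fun V hV =>
    c2 (fun s t => V s t ^ 2) (hV.pow 2)
  have i1 := c2 U hU
  have i2 := c2 Ux hUx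
  have i3 := c3 U hU
  have i4 := c3 Ux hUx
  have i5 := c3 Uy hUy
  set F := fun s => ∫ t in (0:ℝ)..h₂, U s t with hF
  set F' := fun s => ∫ t in (0:ℝ)..h₂, Ux s t with hF'
  set P := fun s => ∫ t in (0:ℝ)..h₂, Ux s t ^ 2 with hP
  set Q := fun s => ∫ t in (0:ℝ)..h₂, Uy s t ^ 2 with hQ
  have e1 : ∫ s in (0:ℝ)..h₁, ∫ t in (0:ℝ)..h₂, U s t ^ 2 ≤
      ∫ s in (0:ℝ)..h₁, (F s ^ 2 / h₂ + (h₂ / π) ^ 2 * Q s) := by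
    apply intervalIntegral.integral_mono_on hh₁.le (i3.intervalIntegrable _ _)
      (Continuous.intervalIntegrable (by fun_prop) _ _)
    intro s _
    exact auxB (U s) (Uy s) h₂ hh₂ (hdy s) (c1 Uy hUy s)
  have e2 := auxA F F' h₁ hh₁ (auxDeriv U Ux h₂ hU hUx hdx) i2 h0
  have e3 : ∫ s in (0:ℝ)..h₁, F' s ^ 2 ≤ ∫ s in (0:ℝ)..h₁, h₂ * P s := by
    apply intervalIntegral.integral_mono_on hh₁.le
      (Continuous.intervalIntegrable (by fun_prop) _ _)
      (Continuous.intervalIntegrable (by fun_prop) _ _)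
    intro s _
    exact auxCS (Ux s) h₂ hh₂ (c1 Ux hUx s)
  have e4 : ∫ s in (0:ℝ)..h₁, ∫ t in (0:ℝ)..h₂, (Ux s t ^ 2 + Uy s t ^ 2) =
      (∫ s in (0:ℝ)..h₁, P s) + ∫ s in (0:ℝ)..h₁, Q s := by
    rw [← intervalIntegral.integral_add (i4.intervalIntegrable _ _) (i5.intervalIntegrable _ _)]
    congr 1
    ext s
    exact intervalIntegral.integral_add (((c1 Ux hUx s).pow 2).intervalIntegrable _ _)
      (((c1 Uy hUy s).pow 2).intervalIntegrable _ _)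
  rw [intervalIntegral.integral_add (Continuous.intervalIntegrable (by fun_prop) _ _)
    (Continuous.intervalIntegrable (by fun_prop) _ _), intervalIntegral.integral_const_mul,
    intervalIntegral.integral_div] at e1
  rw [intervalIntegral.integral_const_mul] at e3
  rw [e4]
  have p0 : 0 ≤ ∫ s in (0:ℝ)..h₁, P s := intervalIntegral.integral_nonneg hh₁.le fun s _ =>
    intervalIntegral.integral_nonneg hh₂.le fun t _ => sq_nonneg _
  have q0 : 0 ≤ ∫ s in (0:ℝ)..h₁, Q s := intervalIntegral.integral_nonneg hh₁.le fun s _ =>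
    intervalIntegral.integral_nonneg hh₂.le fun t _ => sq_nonneg _
  generalize (∫ s in (0:ℝ)..h₁, P s) = p at *
  generalize (∫ s in (0:ℝ)..h₁, Q s) = q at *
  have hp := pi_pos
  have m1 : (2 * h₁ / π) ^ 2 ≤ (π⁻¹ * max (2 * h₁) h₂) ^ 2 := by
    rw [div_eq_inv_mul]; gcongr; exact le_max_left _ _
  have m2 : (h₂ / π) ^ 2 ≤ (π⁻¹ * max (2 * h₁) h₂) ^ 2 := by
    rw [div_eq_inv_mul]; gcongr; exact le_max_right _ _
  have e5 : (∫ s in (0:ℝ)..h₁, F s ^ 2) / h₂ ≤ (2 * h₁ / π) ^ 2 * p := by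
    rw [div_le_iff₀ hh₂]
    calc _ ≤ _ := e2
      _ ≤ (2 * h₁ / π) ^ 2 * (h₂ * p) := by gcongr
      _ = _ := by ring
  have := mul_le_mul_of_nonneg_right m1 p0
  have := mul_le_mul_of_nonneg_right m2 q0
  linarith

lemma auxInt (g : EuclideanSpace ℝ (Fin 2) → ℝ) (hg : Continuous g) (h₁ h₂ : ℝ)
    (hh₁ : 0 < h₁) (hh₂ : 0 < h₂) :
    ∫ x in {x : EuclideanSpace ℝ (Fin 2) |
            x 0 ∈ Set.Ioo 0 h₁ ∧ x 1 ∈ Set.Ioo 0 h₂}, g x =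
    ∫ s in (0:ℝ)..h₁, ∫ t in (0:ℝ)..h₂, g !₂[s, t] := by
  let e : (ℝ × ℝ) ≃ᵐ EuclideanSpace ℝ (Fin 2) :=
    (MeasurableEquiv.finTwoArrow (α := ℝ)).symm.trans (MeasurableEquiv.toLp 2 (Fin 2 → ℝ))
  have he : MeasurePreserving e :=
    (volume_preserving_finTwoArrow ℝ).symm.trans (PiLp.volume_preserving_toLp (Fin 2))
  have hee : ∀ p, e p = !₂[p.1, p.2] := fun p => rfl
  rw [← he.setIntegral_preimage_emb e.measurableEmbedding]
  have hpre : e ⁻¹' {x : EuclideanSpace ℝ (Fin 2) |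
            x 0 ∈ Set.Ioo 0 h₁ ∧ x 1 ∈ Set.Ioo 0 h₂} = Set.Ioo 0 h₁ ×ˢ Set.Ioo 0 h₂ := by
    ext p
    simp [hee]
  have hc : Continuous fun p : ℝ × ℝ => g !₂[p.1, p.2] := by
    apply hg.comp
    fun_prop
  rw [hpre, Measure.volume_eq_prod, setIntegral_prod]
  · simp only [hee]
    rw [intervalIntegral.integral_of_le hh₁.le, integral_Ioc_eq_integral_Ioo]
    congr 1
    ext s
    rw [intervalIntegral.integral_of_le hh₂.le, integral_Ioc_eq_integral_Ioo]
  · simp only [hee]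
    rw [← Measure.volume_eq_prod]
    exact (hc.continuousOn.integrableOn_compact (isCompact_Icc.prod isCompact_Icc)).mono_set
      (Set.prod_mono Set.Ioo_subset_Icc_self Set.Ioo_subset_Icc_self)

lemma auxGradNorm (w : EuclideanSpace ℝ (Fin 2) → ℝ) (x : EuclideanSpace ℝ (Fin 2)) :
    ‖gradient w x‖ ^ 2 = fderiv ℝ w x (EuclideanSpace.single 0 1) ^ 2 +
      fderiv ℝ w x (EuclideanSpace.single 1 1) ^ 2 := by
  have h : ∀ i, gradient w x i = fderiv ℝ w x (EuclideanSpace.single i 1) := by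
    intro i
    have : inner ℝ (gradient w x) (EuclideanSpace.single i (1:ℝ)) =
        fderiv ℝ w x (EuclideanSpace.single i 1) := by
      simp only [gradient]
      exact InnerProductSpace.toDual_symm_apply
    rw [← this]
    have h2 := EuclideanSpace.inner_single_right i (1:ℝ) (gradient w x)
    rw [h2]
    simp
  rw [EuclideanSpace.norm_sq_eq]
  simp [h]

lemma auxDx (w : EuclideanSpace ℝ (Fin 2) → ℝ) (hw : ContDiff ℝ 1 w) (s t : ℝ) :
    HasDerivAt (fun s => w !₂[s, t]) (fderiv ℝ w !₂[s, t] (EuclideanSpace.single 0 1)) s := by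
  have h1 : HasDerivAt (fun s : ℝ => (!₂[s, t] : EuclideanSpace ℝ (Fin 2)))
      (EuclideanSpace.single 0 1) s := by
    have e : (fun s : ℝ => (!₂[s, t] : EuclideanSpace ℝ (Fin 2))) =
        fun s : ℝ => s • EuclideanSpace.single 0 (1:ℝ) + !₂[0, t] := by
      ext s i
      fin_cases i <;> simp
    rw [e]
    simpa using ((hasDerivAt_id s).smul_const
      (EuclideanSpace.single 0 (1:ℝ) : EuclideanSpace ℝ (Fin 2))).add_const !₂[0, t]
  exact ((hw.differentiable one_ne_zero _).hasFDerivAt).comp_hasDerivAt s h1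

lemma auxDy (w : EuclideanSpace ℝ (Fin 2) → ℝ) (hw : ContDiff ℝ 1 w) (s t : ℝ) :
    HasDerivAt (fun t => w !₂[s, t]) (fderiv ℝ w !₂[s, t] (EuclideanSpace.single 1 1)) t := by
  have h1 : HasDerivAt (fun t : ℝ => (!₂[s, t] : EuclideanSpace ℝ (Fin 2)))
      (EuclideanSpace.single 1 1) t := by
    have e : (fun t : ℝ => (!₂[s, t] : EuclideanSpace ℝ (Fin 2))) =
        fun t : ℝ => t • EuclideanSpace.single 1 (1:ℝ) + !₂[s, 0] := by
      ext t i
      fin_cases i <;> simp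
    rw [e]
    simpa using ((hasDerivAt_id t).smul_const
      (EuclideanSpace.single 1 (1:ℝ) : EuclideanSpace ℝ (Fin 2))).add_const !₂[s, 0]
  exact ((hw.differentiable one_ne_zero _).hasFDerivAt).comp_hasDerivAt t h1

lemma auxGradInt (w : EuclideanSpace ℝ (Fin 2) → ℝ) (hw : ContDiff ℝ 1 w) (h₁ h₂ : ℝ)
    (hh₁ : 0 < h₁) (hh₂ : 0 < h₂) :
    ∫ x in {x : EuclideanSpace ℝ (Fin 2) |
            x 0 ∈ Set.Ioo 0 h₁ ∧ x 1 ∈ Set.Ioo 0 h₂}, ‖gradient w x‖ ^ 2 =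
    ∫ s in (0:ℝ)..h₁, ∫ t in (0:ℝ)..h₂,
      (fderiv ℝ w !₂[s, t] (EuclideanSpace.single 0 1) ^ 2 +
      fderiv ℝ w !₂[s, t] (EuclideanSpace.single 1 1) ^ 2) := by
  simp only [auxGradNorm]
  have := hw.continuous_fderiv one_ne_zero
  exact auxInt (fun x => fderiv ℝ w x (EuclideanSpace.single 0 1) ^ 2 +
      fderiv ℝ w x (EuclideanSpace.single 1 1) ^ 2) (by fun_prop) h₁ h₂ hh₁ hh₂

lemma auxSharp (A B M C : ℝ) (hB : 0 < B) (hM : 0 ≤ M) (hA : A = M ^ 2 * B)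
    (h : √A ≤ C * √B) : M ≤ C := by
  rw [hA, sqrt_mul (sq_nonneg M), sqrt_sq hM] at h
  exact le_of_mul_le_mul_right h (sqrt_pos.2 hB)

theorem rectangle_one_side_C1 (h₁ h₂ : ℝ) (hh₁ : 0 < h₁) (hh₂ : 0 < h₂) :
    IsLeast {C : ℝ |
      ∀ w : EuclideanSpace ℝ (Fin 2) → ℝ, ContDiff ℝ 1 w →
        (∫ t in (0:ℝ)..h₂, w !₂[0, t]) = 0 →
        Real.sqrt (∫ x in {x : EuclideanSpace ℝ (Fin 2) |
            x 0 ∈ Set.Ioo 0 h₁ ∧ x 1 ∈ Set.Ioo 0 h₂}, (w x) ^ 2) ≤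
          C * Real.sqrt (∫ x in {x : EuclideanSpace ℝ (Fin 2) |
            x 0 ∈ Set.Ioo 0 h₁ ∧ x 1 ∈ Set.Ioo 0 h₂}, ‖gradient w x‖ ^ 2)}
      (π⁻¹ * max (2 * h₁) h₂) := by
  have hp := pi_pos
  have hp0 := pi_ne_zero
  constructor
  · intro w hw h0
    have hwc := hw.continuous
    have hfc := hw.continuous_fderiv one_ne_zero
    rw [auxInt (fun x => w x ^ 2) (by fun_prop) h₁ h₂ hh₁ hh₂, auxGradInt w hw h₁ h₂ hh₁ hh₂]
    have hM : 0 ≤ π⁻¹ * max (2 * h₁) h₂ := by positivity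
    apply sqrt_le_iff.2
    refine ⟨by positivity, ?_⟩
    have hcE : Continuous fun p : ℝ × ℝ => (!₂[p.1, p.2] : EuclideanSpace ℝ (Fin 2)) := by
      fun_prop
    rw [mul_pow, sq_sqrt]
    · exact aux2D (fun s t => w !₂[s, t])
        (fun s t => fderiv ℝ w !₂[s, t] (EuclideanSpace.single 0 1))
        (fun s t => fderiv ℝ w !₂[s, t] (EuclideanSpace.single 1 1)) h₁ h₂ hh₁ hh₂
        (hwc.comp hcE) ((hfc.comp hcE).clm_apply continuous_const)
        ((hfc.comp hcE).clm_apply continuous_const) (auxDx w hw) (auxDy w hw) h0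
    · exact intervalIntegral.integral_nonneg hh₁.le fun s _ =>
        intervalIntegral.integral_nonneg hh₂.le fun t _ => by positivity
  · intro C hC
    have k1 : 2 * h₁ / π ≤ C := by
      let k := π / (2 * h₁)
      have hk : 0 < k := by positivity
      let w : EuclideanSpace ℝ (Fin 2) → ℝ := fun x => sin (k * x 0)
      have hw : ContDiff ℝ 1 w := by fun_prop
      have dx : ∀ s t, fderiv ℝ w !₂[s, t] (EuclideanSpace.single 0 1) = k * cos (k * s) := by
        intro s t
        refine (auxDx w hw s t).unique ?_
        have : HasDerivAt (fun s => k * s) k s := by simpa using (hasDerivAt_id s).const_mul k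
        simpa [w, mul_comm] using this.sin
      have dy : ∀ s t, fderiv ℝ w !₂[s, t] (EuclideanSpace.single 1 1) = 0 := by
        intro s t
        refine (auxDy w hw s t).unique ?_
        simpa [w] using hasDerivAt_const t (sin (k * s))
      have hkh : k * h₁ = π / 2 := by simp only [k]; field_simp
      have := hC w hw (by simp [w])
      rw [auxInt (fun x => w x ^ 2) (by fun_prop) h₁ h₂ hh₁ hh₂, auxGradInt w hw h₁ h₂ hh₁ hh₂]
        at this
      simp only [dx, dy] at this
      have hA : ∫ s in (0:ℝ)..h₁, ∫ t in (0:ℝ)..h₂, w !₂[s, t] ^ 2 = h₂ * (k⁻¹ * (π / 4)) := by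
        simp [w, intervalIntegral.integral_comp_mul_left (fun x => sin x ^ 2) hk.ne', hkh,
          integral_sin_sq]
        try ring_nf
        try simp
      have hB : ∫ s in (0:ℝ)..h₁, ∫ t in (0:ℝ)..h₂, ((k * cos (k * s)) ^ 2 + 0 ^ 2) =
          h₂ * (k ^ 2 * (k⁻¹ * (π / 4))) := by
        simp [mul_pow, intervalIntegral.integral_comp_mul_left (fun x => cos x ^ 2) hk.ne', hkh,
          integral_cos_sq]
        ring
      rw [hA, hB] at this
      refine auxSharp _ _ _ _ (by positivity) (by positivity) ?_ this
      simp only [k]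
      field_simp
    have k2 : h₂ / π ≤ C := by
      let k := π / h₂
      have hk : 0 < k := by positivity
      let w : EuclideanSpace ℝ (Fin 2) → ℝ := fun x => cos (k * x 1)
      have hw : ContDiff ℝ 1 w := by fun_prop
      have dx : ∀ s t, fderiv ℝ w !₂[s, t] (EuclideanSpace.single 0 1) = 0 := by
        intro s t
        refine (auxDx w hw s t).unique ?_
        simpa [w] using hasDerivAt_const s (cos (k * t))
      have dy : ∀ s t, fderiv ℝ w !₂[s, t] (EuclideanSpace.single 1 1) = - (k * sin (k * t)) := by
        intro s t
        refine (auxDy w hw s t).unique ?_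
        have : HasDerivAt (fun s => k * s) k t := by simpa using (hasDerivAt_id t).const_mul k
        simpa [w, mul_comm] using this.cos
      have hkh : k * h₂ = π := by simp only [k]; field_simp
      have := hC w hw (by
        simp [w, intervalIntegral.integral_comp_mul_left (fun x => cos x) hk.ne', hkh])
      rw [auxInt (fun x => w x ^ 2) (by fun_prop) h₁ h₂ hh₁ hh₂, auxGradInt w hw h₁ h₂ hh₁ hh₂]
        at this
      simp only [dx, dy] at this
      have hA : ∫ s in (0:ℝ)..h₁, ∫ t in (0:ℝ)..h₂, w !₂[s, t] ^ 2 = h₁ * (k⁻¹ * (π / 2)) := by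
        simp [w, intervalIntegral.integral_comp_mul_left (fun x => cos x ^ 2) hk.ne', hkh,
          integral_cos_sq]
        ring
      have hB : ∫ s in (0:ℝ)..h₁, ∫ t in (0:ℝ)..h₂, ((0:ℝ) ^ 2 + (-(k * sin (k * t))) ^ 2) =
          h₁ * (k ^ 2 * (k⁻¹ * (π / 2))) := by
        simp [mul_pow, intervalIntegral.integral_comp_mul_left (fun x => sin x ^ 2) hk.ne', hkh,
          integral_sin_sq]
        ring
      rw [hA, hB] at this
      refine auxSharp _ _ _ _ (by positivity) (by positivity) ?_ this
      simp only [k]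
      field_simp
    rw [← div_eq_inv_mul, ← max_div_div_right hp.le]
    exact max_le k1 k2
end

section
/- Let Ω = (0,h₁)×(0,h₂) with h₁,h₂ > 0 and Γ = {0}×[0,h₂] (one side of the rectangle). Then the sharp constant C₂(Ω,Γ) in the inequality ‖w‖_{L²(Γ)} ≤ C₂‖∇w‖_{L²(Ω)} for all w ∈ H̃¹(Ω,Γ) is equal to ((π/h₂)·tanh(π h₁/h₂))^{-1/2}. -/
open MeasureTheory Real

lemma wirt_dir (L a : ℝ) (hL : 0 < L) (ha : 0 < a) (haL : a * L < π) (F f : ℝ → ℝ)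
   (hf : Continuous f) (hF : ∀ y, HasDerivAt F (f y) y) (h0 : F 0 = 0) (h1 : F L = 0) :
   a^2 * ∫ y in (0:ℝ)..L, (F y)^2 ≤ ∫ y in (0:ℝ)..L, (f y)^2 := by
  have hFc : Continuous F := continuous_iff_continuousAt.2 fun y => (hF y).continuousAt
  set g : ℝ → ℝ := fun y => a * tan (a * (y - L/2)) with hg
  have hc : ∀ y ∈ Set.uIcc 0 L, cos (a * (y - L/2)) ≠ 0 := by
    intro y hy
    rw [Set.uIcc_of_le hL.le] at hy
    apply ne_of_gt
    apply cos_pos_of_mem_Ioo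
    constructor <;> nlinarith [hy.1, hy.2]
  have hgd : ∀ y ∈ Set.uIcc 0 L, HasDerivAt g (a^2 + (g y)^2) y := by
    intro y hy
    have h := (((hasDerivAt_id y).sub_const (L/2)).const_mul a)
    have := ((Real.hasDerivAt_tan (hc y hy)).comp y h).const_mul a
    refine this.congr_deriv ?_
    simp only [hg, tan_eq_sin_div_cos]
    have hc' := hc y hy
    have h3 := sin_sq_add_cos_sq (a * (y - L/2))
    generalize a * (y - L/2) = θ at hc' h3 ⊢
    field_simp
    linear_combination -h3
  have hgc : ContinuousOn g (Set.uIcc 0 L) := fun y hy => (hgd y hy).continuousAt.continuousWithinAt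
  have hint : IntervalIntegrable (fun y => (a^2 + (g y)^2) * (F y)^2 + g y * (2 * F y * f y)) volume 0 L := by
    apply ContinuousOn.intervalIntegrable
    fun_prop
  have hgF : ∫ y in (0:ℝ)..L, ((a^2 + (g y)^2) * (F y)^2 + g y * (2 * F y * f y)) = 0 := by
    rw [intervalIntegral.integral_eq_sub_of_hasDerivAt (f := fun y => g y * (F y)^2)]
    · simp [h0, h1]
    · intro y hy
      refine ((hgd y hy).mul ((hF y).pow 2)).congr_deriv ?_
      simp
    · exact hint
  have h2 : IntervalIntegrable (fun y => (f y)^2 - a^2 * (F y)^2) volume 0 L := 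
    Continuous.intervalIntegrable (by fun_prop) _ _
  have key : 0 ≤ ∫ y in (0:ℝ)..L, (((f y)^2 - a^2 * (F y)^2) + ((a^2 + (g y)^2) * (F y)^2 + g y * (2 * F y * f y))) := by
    apply intervalIntegral.integral_nonneg hL.le
    intro y _
    nlinarith [sq_nonneg (f y + g y * F y)]
  rw [intervalIntegral.integral_add h2 hint, hgF, intervalIntegral.integral_sub, intervalIntegral.integral_const_mul] at key
  · linarith
  all_goals exact Continuous.intervalIntegrable (by fun_prop) _ _

lemma wirt_dir' (L : ℝ) (hL : 0 < L) (F f : ℝ → ℝ)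
   (hf : Continuous f) (hF : ∀ y, HasDerivAt F (f y) y) (h0 : F 0 = 0) (h1 : F L = 0) :
   (π/L)^2 * ∫ y in (0:ℝ)..L, (F y)^2 ≤ ∫ y in (0:ℝ)..L, (f y)^2 := by
  have hk : 0 < π / L := by positivity
  have hT : Filter.Tendsto (fun a : ℝ => a^2 * ∫ y in (0:ℝ)..L, (F y)^2) (nhdsWithin (π/L) (Set.Iio (π/L)))
      (nhds ((π/L)^2 * ∫ y in (0:ℝ)..L, (F y)^2)) := by
    apply Filter.Tendsto.mono_left _ nhdsWithin_le_nhds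
    exact Continuous.tendsto (by fun_prop) _
  apply le_of_tendsto hT
  filter_upwards [Ioo_mem_nhdsLT hk] with a ha
  exact wirt_dir L a hL ha.1 ((lt_div_iff₀ hL).1 ha.2) F f hf hF h0 h1

lemma wirt (L : ℝ) (hL : 0 < L) (f f' : ℝ → ℝ)
   (hf' : Continuous f') (hf : ∀ y, HasDerivAt f (f' y) y) (h0 : ∫ y in (0:ℝ)..L, f y = 0) :
   (π/L)^2 * ∫ y in (0:ℝ)..L, (f y)^2 ≤ ∫ y in (0:ℝ)..L, (f' y)^2 := by
  have hfc : Continuous f := continuous_iff_continuousAt.2 fun y => (hf y).continuousAt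
  set F : ℝ → ℝ := fun y => ∫ t in (0:ℝ)..y, f t with hFdef
  have hF : ∀ y, HasDerivAt F (f y) y := fun y => (hfc.integral_hasStrictDerivAt 0 y).hasDerivAt
  have hFc : Continuous F := continuous_iff_continuousAt.2 fun y => (hF y).continuousAt
  have hF0 : F 0 = 0 := by simp [hFdef]
  have hFL : F L = 0 := h0
  have hD := wirt_dir' L hL F f hfc hF hF0 hFL
  set k := π / L
  have hip : ∫ y in (0:ℝ)..L, (f' y * F y + f y * f y) = 0 := by
    rw [intervalIntegral.integral_eq_sub_of_hasDerivAt (f := fun y => f y * F y)]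
    · simp [hF0, hFL]
    · intro y _
      exact ((hf y).mul (hF y))
    · exact Continuous.intervalIntegrable (by fun_prop) _ _
  have key : 0 ≤ ∫ y in (0:ℝ)..L, (((f' y)^2 + k^4 * (F y)^2) + (2 * k^2 * (f' y * F y + f y * f y) - 2 * k^2 * (f y)^2)) := by
    apply intervalIntegral.integral_nonneg hL.le
    intro y _
    nlinarith [sq_nonneg (f' y + k^2 * F y)]
  rw [intervalIntegral.integral_add, intervalIntegral.integral_add, intervalIntegral.integral_sub, intervalIntegral.integral_const_mul, intervalIntegral.integral_const_mul, intervalIntegral.integral_const_mul, hip] at key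
  · have : 0 ≤ k^2 := sq_nonneg k
    nlinarith
  all_goals exact Continuous.intervalIntegrable (by fun_prop) _ _

lemma deriv_param (L : ℝ) (u ux : ℝ → ℝ → ℝ)
    (hu : Continuous fun p : ℝ × ℝ => u p.1 p.2) (hux : Continuous fun p : ℝ × ℝ => ux p.1 p.2)
    (hd : ∀ x y, HasDerivAt (fun s => u s y) (ux x y) x) (x : ℝ) :
    HasDerivAt (fun s => ∫ y in (0:ℝ)..L, u s y) (∫ y in (0:ℝ)..L, ux x y) x := by
  obtain ⟨M, hM⟩ := ((isCompact_Icc (a := x - 1) (b := x + 1)).prod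
    (isCompact_uIcc (a := (0:ℝ)) (b := L))).exists_bound_of_continuousOn hux.continuousOn
  have hs : ∀ s, Continuous (fun y => u s y) := fun s =>
    hu.comp (by fun_prop : Continuous fun y : ℝ => (s, y))
  have hsx : ∀ s, Continuous (fun y => ux s y) := fun s =>
    hux.comp (by fun_prop : Continuous fun y : ℝ => (s, y))
  refine (intervalIntegral.hasDerivAt_integral_of_dominated_loc_of_deriv_le
    (bound := fun _ => M) (s := Set.Icc (x-1) (x+1)) (F := u) (F' := ux) ?_ ?_ ?_ ?_ ?_ ?_ ?_).2
  · exact Icc_mem_nhds (by linarith) (by linarith)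
  · exact Filter.Eventually.of_forall fun s => (hs s).aestronglyMeasurable
  · exact (hs x).intervalIntegrable _ _
  · exact (hsx x).aestronglyMeasurable
  · exact Filter.Eventually.of_forall fun t ht s hss => hM (s, t) ⟨hss, Set.uIoc_subset_uIcc ht⟩
  · exact continuous_const.intervalIntegrable _ _
  · exact Filter.Eventually.of_forall fun t ht s hss => hd s t

lemma core (h₁ h₂ : ℝ) (hh₁ : 0 < h₁) (hh₂ : 0 < h₂) (u ux uy : ℝ → ℝ → ℝ)
    (hu : Continuous fun p : ℝ × ℝ => u p.1 p.2) (hux : Continuous fun p : ℝ × ℝ => ux p.1 p.2)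
    (huy : Continuous fun p : ℝ × ℝ => uy p.1 p.2)
    (hdx : ∀ x y, HasDerivAt (fun s => u s y) (ux x y) x)
    (hdy : ∀ x y, HasDerivAt (fun s => u x s) (uy x y) y)
    (h0 : ∫ y in (0:ℝ)..h₂, u 0 y = 0) :
    ((π / h₂) * tanh (π * h₁ / h₂)) * ∫ y in (0:ℝ)..h₂, (u 0 y)^2 ≤
      ∫ x in (0:ℝ)..h₁, ∫ y in (0:ℝ)..h₂, ((ux x y)^2 + (uy x y)^2) := by
  have hs : ∀ s, Continuous (fun y => u s y) := fun s =>
    hu.comp (by fun_prop : Continuous fun y : ℝ => (s, y))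
  have hsx : ∀ s, Continuous (fun y => ux s y) := fun s =>
    hux.comp (by fun_prop : Continuous fun y : ℝ => (s, y))
  have hsy : ∀ s, Continuous (fun y => uy s y) := fun s =>
    huy.comp (by fun_prop : Continuous fun y : ℝ => (s, y))
  set k := π / h₂ with hk
  have hkpos : 0 < k := by positivity
  set I : ℝ → ℝ := fun x => ∫ y in (0:ℝ)..h₂, u x y with hI
  set J : ℝ → ℝ := fun x => ∫ y in (0:ℝ)..h₂, ux x y with hJ
  set Q : ℝ → ℝ := fun x => ∫ y in (0:ℝ)..h₂, (u x y)^2 with hQ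
  set R : ℝ → ℝ := fun x => ∫ y in (0:ℝ)..h₂, 2 * u x y * ux x y with hR
  set g : ℝ → ℝ := fun x => k * (sinh (k * (h₁ - x)) / cosh (k * (h₁ - x))) with hg
  have dI : ∀ x, HasDerivAt I (J x) x := fun x => deriv_param h₂ u ux hu hux hdx x
  have dQ : ∀ x, HasDerivAt Q (R x) x := fun x => by
    refine deriv_param h₂ (fun x y => (u x y)^2) (fun x y => 2 * u x y * ux x y)
      (by fun_prop) (by fun_prop) (fun x y => ?_) x
    exact ((hdx x y).pow 2).congr_deriv (by simp)
  have dg : ∀ x, HasDerivAt g ((g x)^2 - k^2) x := fun x => by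
    have hc : cosh (k * (h₁ - x)) ≠ 0 := (cosh_pos _).ne'
    have h := (((hasDerivAt_id x).const_sub h₁).const_mul k)
    refine (((h.sinh).div h.cosh hc).const_mul k).congr_deriv ?_
    simp only [hg, id]
    field_simp
    ring
  have cJ : Continuous J :=
    intervalIntegral.continuous_parametric_intervalIntegral_of_continuous' hux 0 h₂
  have cR : Continuous R :=
    intervalIntegral.continuous_parametric_intervalIntegral_of_continuous'
      (f := fun x y => 2 * u x y * ux x y) (by unfold Function.uncurry; fun_prop) 0 h₂
  have cE : Continuous (fun x => ∫ y in (0:ℝ)..h₂, ((ux x y)^2 + (uy x y)^2)) :=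
    intervalIntegral.continuous_parametric_intervalIntegral_of_continuous'
      (f := fun x y => ((ux x y)^2 + (uy x y)^2)) (by unfold Function.uncurry; fun_prop) 0 h₂
  have cI : Continuous I := continuous_iff_continuousAt.2 fun y => (dI y).continuousAt
  have cQ : Continuous Q := continuous_iff_continuousAt.2 fun y => (dQ y).continuousAt
  have cg : Continuous g := continuous_iff_continuousAt.2 fun y => (dg y).continuousAt
  set V : ℝ → ℝ := fun x => Q x - (I x)^2 / h₂ with hV
  have dV : ∀ x, HasDerivAt V (R x - 2 * I x * J x / h₂) x := fun x => by
    refine ((dQ x).sub (((dI x).pow 2).div_const h₂)).congr_deriv (by simp)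
  have cV : Continuous V := by fun_prop
  have pt : ∀ x, -(((g x)^2 - k^2) * V x + g x * (R x - 2 * I x * J x / h₂)) ≤
      ∫ y in (0:ℝ)..h₂, ((ux x y)^2 + (uy x y)^2) := by
    intro x
    have hsq : ∀ c : ℝ, ∫ y in (0:ℝ)..h₂, (u x y - c)^2 = Q x - 2 * c * I x + c^2 * h₂ := by
      intro c
      have : ∀ y, (u x y - c)^2 = ((u x y)^2 - 2 * c * u x y) + c^2 := fun y => by ring
      simp_rw [this]
      have := hs x
      rw [intervalIntegral.integral_add, intervalIntegral.integral_sub,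
        intervalIntegral.integral_const_mul, intervalIntegral.integral_const]
      · simp [hQ, hI]; ring
      all_goals exact Continuous.intervalIntegrable (by fun_prop) _ _
    have hVx : ∫ y in (0:ℝ)..h₂, (u x y - I x / h₂)^2 = V x := by
      rw [hsq]; simp only [hV]; field_simp; ring
    have hW : k^2 * V x ≤ ∫ y in (0:ℝ)..h₂, (uy x y)^2 := by
      rw [← hVx]
      refine wirt h₂ hh₂ (fun y => u x y - I x / h₂) (uy x) (hsy x)
        (fun y => (hdy x y).sub_const _) ?_
      have := hs x
      rw [intervalIntegral.integral_sub, intervalIntegral.integral_const]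
      · simp [hI]; field_simp; ring
      all_goals exact Continuous.intervalIntegrable (by fun_prop) _ _
    have c1 := hs x
    have c2 := hsx x
    have c3 := hsy x
    have hN : 0 ≤ ∫ y in (0:ℝ)..h₂, (((ux x y)^2 + g x^2 * (u x y - I x / h₂)^2) +
        (g x * (2 * u x y * ux x y) - (2 * g x * I x / h₂) * ux x y)) := by
      apply intervalIntegral.integral_nonneg hh₂.le
      intro y _
      have := sq_nonneg (ux x y + g x * (u x y - I x / h₂))
      refine this.trans (le_of_eq ?_)
      ring
    rw [intervalIntegral.integral_add, intervalIntegral.integral_add,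
      intervalIntegral.integral_sub, intervalIntegral.integral_const_mul,
      intervalIntegral.integral_const_mul, intervalIntegral.integral_const_mul, hVx] at hN
    · rw [intervalIntegral.integral_add]
      · have e1 : g x * (R x - 2 * I x * J x / h₂) = g x * R x - 2 * g x * I x / h₂ * J x := by ring
        rw [e1]
        simp only [hR, hJ]
        linarith
      all_goals exact Continuous.intervalIntegrable (by fun_prop) _ _
    all_goals exact Continuous.intervalIntegrable (by fun_prop) _ _
  have ftc : ∫ x in (0:ℝ)..h₁, (((g x)^2 - k^2) * V x + g x * (R x - 2 * I x * J x / h₂)) =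
      g h₁ * V h₁ - g 0 * V 0 := by
    refine intervalIntegral.integral_eq_sub_of_hasDerivAt (f := fun x => g x * V x) ?_ ?_
    · intro x _
      exact (dg x).mul (dV x)
    · exact Continuous.intervalIntegrable (by fun_prop) _ _
  have mono := intervalIntegral.integral_mono_on (μ := volume) hh₁.le
    (Continuous.intervalIntegrable (by fun_prop) _ _) (cE.intervalIntegrable _ _) (fun x _ => pt x)
  rw [intervalIntegral.integral_neg, ftc] at mono
  have hg1 : g h₁ = 0 := by simp [hg]
  have hg0 : g 0 = k * tanh (π * h₁ / h₂) := by
    simp only [hg, tanh_eq_sinh_div_cosh, sub_zero]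
    have : k * h₁ = π * h₁ / h₂ := by rw [hk]; ring
    rw [this]
  have hV0 : V 0 = ∫ y in (0:ℝ)..h₂, (u 0 y)^2 := by
    have : I 0 = 0 := h0
    simp [hV, this, hQ]
  rw [hg1, hg0, hV0] at mono
  linarith

lemma grad_int (h₁ h₂ : ℝ) (hh₁ : 0 < h₁) (hh₂ : 0 < h₂) (w : EuclideanSpace ℝ (Fin 2) → ℝ)
    (ux uy : ℝ → ℝ → ℝ) (hux : Continuous fun p : ℝ × ℝ => ux p.1 p.2)
    (huy : Continuous fun p : ℝ × ℝ => uy p.1 p.2)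
    (hx : ∀ x y, fderiv ℝ w !₂[x, y] (EuclideanSpace.single 0 1) = ux x y)
    (hy : ∀ x y, fderiv ℝ w !₂[x, y] (EuclideanSpace.single 1 1) = uy x y) :
    ∫ x in {x : EuclideanSpace ℝ (Fin 2) |
            x 0 ∈ Set.Ioo 0 h₁ ∧ x 1 ∈ Set.Ioo 0 h₂}, ‖gradient w x‖ ^ 2 =
      ∫ x in (0:ℝ)..h₁, ∫ y in (0:ℝ)..h₂, ((ux x y)^2 + (uy x y)^2) := by
  have hgr : ∀ x y, ‖gradient w !₂[x, y]‖^2 = (ux x y)^2 + (uy x y)^2 := by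
    intro x y
    have hi : ∀ i, (gradient w !₂[x, y]) i = fderiv ℝ w !₂[x, y] (EuclideanSpace.single i 1) := by
      intro i
      rw [← inner_gradient_left, EuclideanSpace.inner_single_right]
      simp
    rw [EuclideanSpace.real_norm_sq_eq, Fin.sum_univ_two, ← hx, ← hy, hi, hi]
  have mp : MeasurePreserving (fun p : ℝ × ℝ => (!₂[p.1, p.2] : EuclideanSpace ℝ (Fin 2))) :=
    (PiLp.volume_preserving_toLp (Fin 2)).comp ((volume_preserving_finTwoArrow ℝ).symm)
  have me : MeasurableEmbedding (fun p : ℝ × ℝ => (!₂[p.1, p.2] : EuclideanSpace ℝ (Fin 2))) :=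
    ((MeasurableEquiv.finTwoArrow (α := ℝ)).symm.trans
      (MeasurableEquiv.toLp 2 (Fin 2 → ℝ))).measurableEmbedding
  rw [← mp.setIntegral_preimage_emb me]
  have hset : (fun p : ℝ × ℝ => (!₂[p.1, p.2] : EuclideanSpace ℝ (Fin 2))) ⁻¹'
      {x : EuclideanSpace ℝ (Fin 2) | x 0 ∈ Set.Ioo 0 h₁ ∧ x 1 ∈ Set.Ioo 0 h₂} =
      Set.Ioo 0 h₁ ×ˢ Set.Ioo 0 h₂ := by
    ext p; simp
  rw [hset]
  simp_rw [hgr]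
  rw [Measure.volume_eq_prod, setIntegral_prod]
  · rw [intervalIntegral.integral_of_le hh₁.le, integral_Ioc_eq_integral_Ioo]
    simp_rw [intervalIntegral.integral_of_le hh₂.le, integral_Ioc_eq_integral_Ioo]
  · have hc : Continuous (fun z : ℝ × ℝ => ux z.1 z.2 ^ 2 + uy z.1 z.2 ^ 2) := by fun_prop
    exact (hc.continuousOn.integrableOn_compact (isCompact_Icc.prod isCompact_Icc)).mono_set
      (Set.prod_mono Set.Ioo_subset_Icc_self Set.Ioo_subset_Icc_self)

lemma dline0 (w : EuclideanSpace ℝ (Fin 2) → ℝ) (hw : Differentiable ℝ w) (x y : ℝ) :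
    HasDerivAt (fun s => w !₂[s, y]) (fderiv ℝ w !₂[x, y] (EuclideanSpace.single 0 1)) x := by
  have h : HasDerivAt (fun s : ℝ => (!₂[s, y] : EuclideanSpace ℝ (Fin 2)))
      (EuclideanSpace.single 0 1) x := by
    rw [hasDerivAt_iff_hasFDerivAt, ← hasFDerivWithinAt_univ, hasFDerivWithinAt_euclidean]
    intro i
    fin_cases i
    · rw [hasFDerivWithinAt_univ]
      refine (hasDerivAt_id x).hasFDerivAt.congr_fderiv ?_
      ext; simp
    · rw [hasFDerivWithinAt_univ]
      refine (hasDerivAt_const x y).hasFDerivAt.congr_fderiv ?_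
      ext; simp
  exact (hw _).hasFDerivAt.comp_hasDerivAt x h

lemma dline1 (w : EuclideanSpace ℝ (Fin 2) → ℝ) (hw : Differentiable ℝ w) (x y : ℝ) :
    HasDerivAt (fun s => w !₂[x, s]) (fderiv ℝ w !₂[x, y] (EuclideanSpace.single 1 1)) y := by
  have h : HasDerivAt (fun s : ℝ => (!₂[x, s] : EuclideanSpace ℝ (Fin 2)))
      (EuclideanSpace.single 1 1) y := by
    rw [hasDerivAt_iff_hasFDerivAt, ← hasFDerivWithinAt_univ, hasFDerivWithinAt_euclidean]
    intro i
    fin_cases i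
    · rw [hasFDerivWithinAt_univ]
      refine (hasDerivAt_const y x).hasFDerivAt.congr_fderiv ?_
      ext; simp
    · rw [hasFDerivWithinAt_univ]
      refine (hasDerivAt_id y).hasFDerivAt.congr_fderiv ?_
      ext; simp
  exact (hw _).hasFDerivAt.comp_hasDerivAt y h

lemma cont_pair : Continuous (fun p : ℝ × ℝ => (!₂[p.1, p.2] : EuclideanSpace ℝ (Fin 2))) := by
  refine (PiLp.continuous_toLp 2 _).comp ?_
  refine continuous_pi fun i => ?_
  fin_cases i
  · exact continuous_fst
  · exact continuous_snd

/-- The sharp constant `C₂(Ω,Γ)` in the inequality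
`‖w‖_{L²(Γ)} ≤ C₂ ‖∇w‖_{L²(Ω)}` for functions with zero mean trace on `Γ`,
where `Ω = (0,h₁) × (0,h₂)` and `Γ = {0} × [0,h₂]` is one side of the rectangle,
equals `((π/h₂)·tanh(π h₁/h₂))^(-1/2)`. -/
theorem rectangle_one_side_C2 (h₁ h₂ : ℝ) (hh₁ : 0 < h₁) (hh₂ : 0 < h₂) :
    IsLeast {C : ℝ |
      ∀ w : EuclideanSpace ℝ (Fin 2) → ℝ, ContDiff ℝ 1 w →
        (∫ t in (0:ℝ)..h₂, w !₂[0, t]) = 0 →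
        Real.sqrt (∫ t in (0:ℝ)..h₂, (w !₂[0, t]) ^ 2) ≤
          C * Real.sqrt (∫ x in {x : EuclideanSpace ℝ (Fin 2) |
            x 0 ∈ Set.Ioo 0 h₁ ∧ x 1 ∈ Set.Ioo 0 h₂}, ‖gradient w x‖ ^ 2)}
      (1 / Real.sqrt ((π / h₂) * Real.tanh (π * h₁ / h₂))) := by
  have harg : 0 < π * h₁ / h₂ := by positivity
  have hs : 0 < sinh (π * h₁ / h₂) := sinh_pos_iff.2 harg
  have hcosh : 0 < cosh (π * h₁ / h₂) := cosh_pos _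
  have hT : 0 < tanh (π * h₁ / h₂) := by rw [tanh_eq_sinh_div_cosh]; positivity
  have hA : 0 < (π / h₂) * Real.tanh (π * h₁ / h₂) := by positivity
  constructor
  · intro w hw h0
    have hwd : Differentiable ℝ w := hw.differentiable (by norm_num)
    have hfc : Continuous (fderiv ℝ w) := hw.continuous_fderiv (by norm_num)
    have cx : Continuous fun p : ℝ × ℝ => fderiv ℝ w !₂[p.1, p.2] (EuclideanSpace.single 0 1) :=
      (hfc.comp cont_pair).clm_apply continuous_const
    have cy : Continuous fun p : ℝ × ℝ => fderiv ℝ w !₂[p.1, p.2] (EuclideanSpace.single 1 1) :=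
      (hfc.comp cont_pair).clm_apply continuous_const
    rw [grad_int h₁ h₂ hh₁ hh₂ w (fun x y => fderiv ℝ w !₂[x, y] (EuclideanSpace.single 0 1))
      (fun x y => fderiv ℝ w !₂[x, y] (EuclideanSpace.single 1 1)) cx cy
      (fun _ _ => rfl) (fun _ _ => rfl)]
    have := core h₁ h₂ hh₁ hh₂ (fun x y => w !₂[x, y]) _ _ (hw.continuous.comp cont_pair) cx cy
      (dline0 w hwd) (dline1 w hwd) h0
    rw [one_div_mul_eq_div, le_div_iff₀ (sqrt_pos.2 hA), mul_comm, ← sqrt_mul hA.le]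
    exact sqrt_le_sqrt this
  · intro C hC
    set k := π / h₂ with hk
    have hkp : 0 < k := by positivity
    have hkh : k * h₂ = π := by rw [hk]; field_simp
    have hkh1 : k * h₁ = π * h₁ / h₂ := by rw [hk]; ring
    rw [← hkh1] at hA hT hs hcosh ⊢
    set w : EuclideanSpace ℝ (Fin 2) → ℝ := fun p => cos (k * p 1) * cosh (k * (h₁ - p 0)) with hwdef
    have hw : ContDiff ℝ 1 w := by
      simp only [hwdef]
      fun_prop
    have hwd : Differentiable ℝ w := hw.differentiable (by norm_num)
    have ex : ∀ x y, fderiv ℝ w !₂[x, y] (EuclideanSpace.single 0 1) =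
        -k * cos (k * y) * sinh (k * (h₁ - x)) := by
      intro x y
      refine (dline0 w hwd x y).unique ?_
      have h := ((((hasDerivAt_id x).const_sub h₁).const_mul k).cosh).const_mul (cos (k * y))
      refine (h.congr_deriv ?_).congr_of_eventuallyEq (Filter.Eventually.of_forall fun s => ?_)
      · simp only [id]; ring
      · simp [hwdef]
    have ey : ∀ x y, fderiv ℝ w !₂[x, y] (EuclideanSpace.single 1 1) =
        -k * sin (k * y) * cosh (k * (h₁ - x)) := by
      intro x y
      refine (dline1 w hwd x y).unique ?_
      have h := (((hasDerivAt_id y).const_mul k).cos).mul_const (cosh (k * (h₁ - x)))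
      refine (h.congr_deriv ?_).congr_of_eventuallyEq (Filter.Eventually.of_forall fun s => ?_)
      · simp only [id]; ring
      · simp [hwdef]
    have icos : ∫ y in (0:ℝ)..h₂, cos (k * y) = 0 := by
      rw [intervalIntegral.integral_comp_mul_left (fun y => cos y) hkp.ne', hkh]
      simp
    have icos2 : ∫ y in (0:ℝ)..h₂, cos (k * y)^2 = h₂ / 2 := by
      rw [intervalIntegral.integral_comp_mul_left (fun y => cos y ^ 2) hkp.ne', hkh, integral_cos_sq]
      simp [hk]; field_simp
    have isin2 : ∫ y in (0:ℝ)..h₂, sin (k * y)^2 = h₂ / 2 := by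
      rw [intervalIntegral.integral_comp_mul_left (fun y => sin y ^ 2) hkp.ne', hkh, integral_sin_sq]
      simp [hk]; field_simp
    have h := hC w hw (by simp [hwdef, icos])
    have e1 : ∫ t in (0:ℝ)..h₂, (w !₂[0, t]) ^ 2 = h₂ / 2 * cosh (k * h₁)^2 := by
      simp [hwdef, mul_pow, icos2]
    have e2 : ∫ x in (0:ℝ)..h₁, ∫ y in (0:ℝ)..h₂, ((-k * cos (k * y) * sinh (k * (h₁ - x)))^2 +
        (-k * sin (k * y) * cosh (k * (h₁ - x)))^2) =
        h₂ / 2 * cosh (k * h₁)^2 * (k * tanh (k * h₁)) := by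
      have inner : ∀ x, ∫ y in (0:ℝ)..h₂, ((-k * cos (k * y) * sinh (k * (h₁ - x)))^2 +
        (-k * sin (k * y) * cosh (k * (h₁ - x)))^2) =
          h₂ / 2 * k^2 * (sinh (k * (h₁ - x))^2 + cosh (k * (h₁ - x))^2) := by
        intro x
        have : ∀ y, ((-k * cos (k * y) * sinh (k * (h₁ - x)))^2 +
          (-k * sin (k * y) * cosh (k * (h₁ - x)))^2) =
          (k^2 * sinh (k * (h₁ - x))^2) * cos (k * y)^2 +
          (k^2 * cosh (k * (h₁ - x))^2) * sin (k * y)^2 := fun y => by ring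
        simp_rw [this]
        rw [intervalIntegral.integral_add, intervalIntegral.integral_const_mul,
          intervalIntegral.integral_const_mul, icos2, isin2]
        · ring
        all_goals exact Continuous.intervalIntegrable (by fun_prop) _ _
      simp_rw [inner]
      rw [intervalIntegral.integral_eq_sub_of_hasDerivAt
        (f := fun x => - (h₂ / 2 * k) * (sinh (k * (h₁ - x)) * cosh (k * (h₁ - x))))]
      · simp [tanh_eq_sinh_div_cosh]
        field_simp
      · intro x _
        have h := (((hasDerivAt_id x).const_sub h₁).const_mul k)
        refine ((h.sinh.mul h.cosh).const_mul _).congr_deriv ?_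
        simp only [id]; ring
      · exact Continuous.intervalIntegrable (by fun_prop) _ _
    rw [grad_int h₁ h₂ hh₁ hh₂ w _ _ (by fun_prop) (by fun_prop) ex ey, e2, e1,
      sqrt_mul (by positivity : 0 ≤ h₂ / 2 * cosh (k * h₁)^2)] at h
    have hp : 0 < sqrt (h₂ / 2 * cosh (k * h₁)^2) := sqrt_pos.2 (by positivity)
    rw [div_le_iff₀ (sqrt_pos.2 hA)]
    by_contra hlt
    push Not at hlt
    nlinarith
end

section
/- Let Ω = (0,h₁)×(0,h₂)×(0,h₃) with h₁,h₂,h₃ > 0 and Γ = ∂Ω ∩ {x₁ = 0} (one face of the parallelepiped). Then the sharp constant C₁(Ω,Γ) in the inequality ‖w‖_{L²(Ω)} ≤ C₁‖∇w‖_{L²(Ω)} for all w ∈ H̃¹(Ω,Γ) is equal to (1/π)·max{2h₁, h₂, h₃}. -/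
open MeasureTheory Real

lemma aux_dom {h c b : ℝ} (hh : 0 < h) (u u' : ℝ → ℝ) (hu : ∀ x, HasDerivAt u (u' x) x)
    (hu' : Continuous u') (hb : ∀ x ∈ Set.Icc 0 h, 0 < cos (b * (c - x)))
    (h0 : tan (b * (c - 0)) * u 0 ^ 2 = 0) (h1 : tan (b * (c - h)) * u h ^ 2 = 0) :
    b ^ 2 * ∫ x in (0:ℝ)..h, u x ^ 2 ≤ ∫ x in (0:ℝ)..h, u' x ^ 2 := by
  have hc : Continuous u := continuous_iff_continuousAt.2 fun x => (hu x).continuousAt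
  have hIcc : Set.uIcc 0 h = Set.Icc 0 h := Set.uIcc_of_le hh.le
  have hT : ContinuousOn (fun x => tan (b * (c - x))) (Set.uIcc 0 h) := by
    rw [hIcc]
    have : (fun x => tan (b * (c - x))) = fun x => sin (b * (c - x)) / cos (b * (c - x)) := by
      funext x; rw [tan_eq_sin_div_cos]
    rw [this]
    refine ContinuousOn.div (by fun_prop) (by fun_prop) fun x hx => (hb x hx).ne'
  have hd : ∀ x ∈ Set.uIcc 0 h, HasDerivAt (fun x => b * (tan (b * (c - x)) * u x ^ 2))
      (-b ^ 2 * (1 + tan (b * (c - x)) ^ 2) * u x ^ 2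
        + 2 * b * tan (b * (c - x)) * u x * u' x) x := by
    intro x hx
    rw [hIcc] at hx
    have hx0 := (hb x hx).ne'
    have e1 : HasDerivAt (fun x => b * (c - x)) (-b) x := by
      simpa using ((hasDerivAt_id x).const_sub c).const_mul b
    have e2 := (Real.hasDerivAt_tan hx0).comp x e1
    have e3 := (e2.mul ((hu x).pow 2)).const_mul b
    refine e3.congr_deriv ?_
    have : 1 / cos (b * (c - x)) ^ 2 = 1 + tan (b * (c - x)) ^ 2 := by
      rw [tan_eq_sin_div_cos]
      field_simp
      linarith [sin_sq_add_cos_sq (b * (c - x))]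
    simp only [Function.comp, this, Pi.pow_apply]
    push_cast
    ring
  have hcont : ContinuousOn (fun x => -b ^ 2 * (1 + tan (b * (c - x)) ^ 2) * u x ^ 2
        + 2 * b * tan (b * (c - x)) * u x * u' x) (Set.uIcc 0 h) := by
    have := hc.continuousOn (s := Set.uIcc 0 h)
    have := hu'.continuousOn (s := Set.uIcc 0 h)
    fun_prop
  have hI := intervalIntegral.integral_eq_sub_of_hasDerivAt hd hcont.intervalIntegrable
  rw [h0, h1] at hI
  have hle : ∫ x in (0:ℝ)..h, (b ^ 2 * u x ^ 2 + (-b ^ 2 * (1 + tan (b * (c - x)) ^ 2) * u x ^ 2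
        + 2 * b * tan (b * (c - x)) * u x * u' x)) ≤ ∫ x in (0:ℝ)..h, u' x ^ 2 := by
    refine intervalIntegral.integral_mono_on hh.le ?_ ?_ ?_
    · refine ContinuousOn.intervalIntegrable (ContinuousOn.add ?_ hcont)
      exact Continuous.continuousOn (by fun_prop)
    · exact Continuous.intervalIntegrable (by fun_prop) _ _
    · intro x _
      nlinarith [sq_nonneg (u' x - b * tan (b * (c - x)) * u x)]
  rw [intervalIntegral.integral_add (Continuous.intervalIntegrable (by fun_prop) _ _)
    hcont.intervalIntegrable, hI, intervalIntegral.integral_const_mul] at hle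
  linarith

lemma aux_lim {B I J : ℝ} (hB : 0 < B) (H : ∀ b, 0 < b → b < B → b ^ 2 * I ≤ J) : B ^ 2 * I ≤ J := by
  have h1 : Filter.Tendsto (fun b : ℝ => b ^ 2 * I) (nhdsWithin B (Set.Iio B)) (nhds (B ^ 2 * I)) :=
    (Continuous.tendsto (by fun_prop) B).mono_left nhdsWithin_le_nhds
  refine le_of_tendsto h1 ?_
  filter_upwards [Ioo_mem_nhdsLT hB] with b hb using H b hb.1 hb.2

lemma half_dirichlet {h : ℝ} (hh : 0 < h) (u u' : ℝ → ℝ) (hu : ∀ x, HasDerivAt u (u' x) x)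
    (hu' : Continuous u') (h0 : u 0 = 0) :
    (π / (2 * h)) ^ 2 * ∫ x in (0:ℝ)..h, u x ^ 2 ≤ ∫ x in (0:ℝ)..h, u' x ^ 2 := by
  refine aux_lim (by positivity) fun b hb0 hb => ?_
  refine aux_dom (c := h) hh u u' hu hu' (fun x hx => ?_) (by simp [h0]) (by simp)
  rw [lt_div_iff₀ (by positivity)] at hb
  apply cos_pos_of_mem_Ioo
  constructor <;> nlinarith [hx.1, hx.2, pi_pos]

lemma dirichlet {h : ℝ} (hh : 0 < h) (u u' : ℝ → ℝ) (hu : ∀ x, HasDerivAt u (u' x) x)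
    (hu' : Continuous u') (h0 : u 0 = 0) (h1 : u h = 0) :
    (π / h) ^ 2 * ∫ x in (0:ℝ)..h, u x ^ 2 ≤ ∫ x in (0:ℝ)..h, u' x ^ 2 := by
  refine aux_lim (by positivity) fun b hb0 hb => ?_
  refine aux_dom (c := h / 2) hh u u' hu hu' (fun x hx => ?_) (by simp [h0]) (by simp [h1])
  rw [lt_div_iff₀ (by positivity)] at hb
  apply cos_pos_of_mem_Ioo
  constructor <;> nlinarith [hx.1, hx.2, pi_pos]

lemma neumann0 {h : ℝ} (hh : 0 < h) (u u' : ℝ → ℝ) (hu : ∀ x, HasDerivAt u (u' x) x)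
    (hu' : Continuous u') (hm : ∫ x in (0:ℝ)..h, u x = 0) :
    ∫ x in (0:ℝ)..h, u x ^ 2 ≤ (h / π) ^ 2 * ∫ x in (0:ℝ)..h, u' x ^ 2 := by
  have hc : Continuous u := continuous_iff_continuousAt.2 fun x => (hu x).continuousAt
  set U : ℝ → ℝ := fun x => ∫ t in (0:ℝ)..x, u t with hU
  have hUd : ∀ x, HasDerivAt U (u x) x := fun x => hc.integral_hasStrictDerivAt 0 x |>.hasDerivAt
  have hUc : Continuous U := continuous_iff_continuousAt.2 fun x => (hUd x).continuousAt
  have hU0 : U 0 = 0 := by simp [hU]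
  have hU1 : U h = 0 := hm
  have hD := dirichlet hh U u hUd hc hU0 hU1
  have hP := intervalIntegral.integral_mul_deriv_eq_deriv_mul (a := 0) (b := h) (u := U) (v := u) (u' := u) (v' := u')
    (fun x _ => hUd x) (fun x _ => hu x) (hc.intervalIntegrable _ _) (hu'.intervalIntegrable _ _)
  rw [hU0, hU1] at hP
  have hk : 0 < π / h := by positivity
  have hle : ∫ x in (0:ℝ)..h, -(2 * (U x * u' x)) ≤ ∫ x in (0:ℝ)..h, ((π / h) ^ 2 * U x ^ 2 + (h / π) ^ 2 * u' x ^ 2) := by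
    refine intervalIntegral.integral_mono_on hh.le (Continuous.intervalIntegrable (by fun_prop) _ _)
      (Continuous.intervalIntegrable (by fun_prop) _ _) fun x _ => ?_
    have e : (π / h) * (h / π) = 1 := by field_simp
    have : ((π / h) * U x + (h / π) * u' x) ^ 2 = (π / h) ^ 2 * U x ^ 2 + (h / π) ^ 2 * u' x ^ 2 + 2 * ((π / h) * (h / π)) * (U x * u' x) := by ring
    rw [e] at this
    nlinarith [sq_nonneg ((π / h) * U x + (h / π) * u' x)]
  rw [intervalIntegral.integral_neg, intervalIntegral.integral_const_mul, hP,
    intervalIntegral.integral_add (Continuous.intervalIntegrable (by fun_prop) _ _)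
      (Continuous.intervalIntegrable (by fun_prop) _ _), intervalIntegral.integral_const_mul,
      intervalIntegral.integral_const_mul] at hle
  have : ∫ x in (0:ℝ)..h, u x * u x = ∫ x in (0:ℝ)..h, u x ^ 2 := by simp only [sq]
  rw [this] at hle
  linarith

lemma var_id {h : ℝ} (hh : 0 < h) (u : ℝ → ℝ) (hc : Continuous u) :
    ∫ x in (0:ℝ)..h, (u x - h⁻¹ * ∫ t in (0:ℝ)..h, u t) ^ 2 =
      (∫ x in (0:ℝ)..h, u x ^ 2) - h⁻¹ * (∫ x in (0:ℝ)..h, u x) ^ 2 := by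
  set m := ∫ t in (0:ℝ)..h, u t with hm
  have : ∀ x, (u x - h⁻¹ * m) ^ 2 = u x ^ 2 - 2 * (h⁻¹ * m) * u x + (h⁻¹ * m) ^ 2 := fun x => by ring
  simp_rw [this]
  rw [intervalIntegral.integral_add (Continuous.intervalIntegrable (by fun_prop) _ _)
      (Continuous.intervalIntegrable (by fun_prop) _ _), intervalIntegral.integral_sub (Continuous.intervalIntegrable (by fun_prop) _ _)
      (Continuous.intervalIntegrable (by fun_prop) _ _), intervalIntegral.integral_const_mul, ← hm, intervalIntegral.integral_const]
  simp only [smul_eq_mul, sub_zero]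
  field_simp
  ring

lemma neumann {h : ℝ} (hh : 0 < h) (u u' : ℝ → ℝ) (hu : ∀ x, HasDerivAt u (u' x) x)
    (hu' : Continuous u') :
    ∫ x in (0:ℝ)..h, u x ^ 2 ≤ h⁻¹ * (∫ x in (0:ℝ)..h, u x) ^ 2 + (h / π) ^ 2 * ∫ x in (0:ℝ)..h, u' x ^ 2 := by
  have hc : Continuous u := continuous_iff_continuousAt.2 fun x => (hu x).continuousAt
  have := neumann0 hh (fun x => u x - h⁻¹ * ∫ t in (0:ℝ)..h, u t) u' (fun x => (hu x).sub_const _) hu' (by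
    rw [intervalIntegral.integral_sub (Continuous.intervalIntegrable (by fun_prop) _ _)
      (Continuous.intervalIntegrable (by fun_prop) _ _), intervalIntegral.integral_const]
    simp only [smul_eq_mul, sub_zero]
    field_simp
    ring)
  rw [var_id hh u hc] at this
  linarith

lemma cs {h : ℝ} (hh : 0 < h) (u : ℝ → ℝ) (hc : Continuous u) :
    (∫ x in (0:ℝ)..h, u x) ^ 2 ≤ h * ∫ x in (0:ℝ)..h, u x ^ 2 := by
  have h1 := var_id hh u hc
  have h2 : 0 ≤ ∫ x in (0:ℝ)..h, (u x - h⁻¹ * ∫ t in (0:ℝ)..h, u t) ^ 2 :=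
    intervalIntegral.integral_nonneg hh.le fun x _ => sq_nonneg _
  rw [h1] at h2
  have := mul_nonneg hh.le h2
  have e : h * h⁻¹ = 1 := by field_simp
  rw [mul_sub, ← mul_assoc, e] at this
  linarith

lemma par_cont {X : Type*} [TopologicalSpace X] {h : ℝ} (f : X → ℝ → ℝ) (hf : Continuous (Function.uncurry f)) :
    Continuous fun s => ∫ z in (0:ℝ)..h, f s z :=
  intervalIntegral.continuous_parametric_intervalIntegral_of_continuous' hf 0 h

lemma par_deriv {h : ℝ} (f f' : ℝ → ℝ → ℝ) (hf : Continuous (Function.uncurry f)) 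
    (hf' : Continuous (Function.uncurry f')) (hd : ∀ s z, HasDerivAt (fun s => f s z) (f' s z) s) (s : ℝ) :
    HasDerivAt (fun s => ∫ z in (0:ℝ)..h, f s z) (∫ z in (0:ℝ)..h, f' s z) s := by
  have hK : IsCompact (Metric.closedBall s 1 ×ˢ Set.uIcc 0 h) := (isCompact_closedBall s 1).prod isCompact_uIcc
  obtain ⟨C, hC⟩ := hK.exists_bound_of_continuousOn hf'.continuousOn
  refine (intervalIntegral.hasDerivAt_integral_of_dominated_loc_of_deriv_le (bound := fun _ => C) (F' := f')
    (Metric.closedBall_mem_nhds s one_pos) ?_ ?_ ?_ ?_ ?_ ?_).2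
  · exact Filter.Eventually.of_forall fun t => (Continuous.aestronglyMeasurable (by fun_prop))
  · exact Continuous.intervalIntegrable (by fun_prop) _ _
  · exact Continuous.aestronglyMeasurable (by fun_prop)
  · refine Filter.Eventually.of_forall fun t ht x hx => hC (x, t) ⟨hx, Set.uIoc_subset_uIcc ht⟩
  · exact intervalIntegrable_const
  · exact Filter.Eventually.of_forall fun t ht x hx => hd x t

abbrev E3 := EuclideanSpace ℝ (Fin 3)

lemma cont3 : Continuous fun p : ℝ × ℝ × ℝ => (!₂[p.1, p.2.1, p.2.2] : E3) := by
  refine (PiLp.continuous_toLp 2 _).comp (continuous_pi fun i => ?_)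
  fin_cases i <;> simp <;> fun_prop

lemma box_int (h₁ h₂ h₃ : ℝ) (hh₁ : 0 < h₁) (hh₂ : 0 < h₂) (hh₃ : 0 < h₃) (F : E3 → ℝ) (hF : Continuous F) :
    ∫ x in {x : EuclideanSpace ℝ (Fin 3) |
            x 0 ∈ Set.Ioo 0 h₁ ∧ x 1 ∈ Set.Ioo 0 h₂ ∧ x 2 ∈ Set.Ioo 0 h₃}, F x =
    ∫ x in (0:ℝ)..h₁, ∫ y in (0:ℝ)..h₂, ∫ z in (0:ℝ)..h₃, F !₂[x, y, z] := by
  have m1 := (EuclideanSpace.volume_preserving_symm_measurableEquiv_toLp (Fin 3)).symm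
  have m2 := (volume_preserving_piFinSuccAbove (fun _ : Fin 3 => ℝ) 0).symm
  have m3 := (volume_preserving_finTwoArrow ℝ).symm
  have m4 := (MeasurePreserving.id (volume : Measure ℝ)).prod m3
  have m5 := m1.comp (m2.comp m4)
  have hcomp : ((MeasurableEquiv.toLp 2 (Fin 3 → ℝ)).symm.symm ∘ (MeasurableEquiv.piFinSuccAbove (fun _ : Fin 3 => ℝ) 0).symm ∘
      Prod.map id (MeasurableEquiv.finTwoArrow (α := ℝ)).symm) = fun p : ℝ × ℝ × ℝ => (!₂[p.1, p.2.1, p.2.2] : E3) := by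
    funext p
    ext i
    fin_cases i <;> rfl
  have hc := cont3
  have hemb : MeasurableEmbedding (fun p : ℝ × ℝ × ℝ => (!₂[p.1, p.2.1, p.2.2] : E3)) := by
    refine Topology.IsClosedEmbedding.measurableEmbedding ?_
    refine Topology.IsClosedEmbedding.of_continuous_injective_isClosedMap hc ?_ ?_
    · intro p q hpq
      have e0 := congrArg (fun v : E3 => v 0) hpq
      have e1 := congrArg (fun v : E3 => v 1) hpq
      have e2 := congrArg (fun v : E3 => v 2) hpq
      simp at e0 e1 e2
      exact Prod.ext e0 (Prod.ext e1 e2)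
    · let H : ℝ × ℝ × ℝ ≃ₜ E3 :=
        { toFun := fun p => !₂[p.1, p.2.1, p.2.2]
          invFun := fun v => (v 0, v 1, v 2)
          left_inv := fun p => by simp
          right_inv := fun v => by ext i; fin_cases i <;> rfl
          continuous_toFun := hc
          continuous_invFun := by fun_prop }
      exact H.isClosedMap
  rw [hcomp] at m5
  have hset := m5.setIntegral_preimage_emb hemb F {x : EuclideanSpace ℝ (Fin 3) |
            x 0 ∈ Set.Ioo 0 h₁ ∧ x 1 ∈ Set.Ioo 0 h₂ ∧ x 2 ∈ Set.Ioo 0 h₃}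
  rw [← hset]
  have hpre : (fun p : ℝ × ℝ × ℝ => (!₂[p.1, p.2.1, p.2.2] : E3)) ⁻¹' {x : EuclideanSpace ℝ (Fin 3) |
            x 0 ∈ Set.Ioo 0 h₁ ∧ x 1 ∈ Set.Ioo 0 h₂ ∧ x 2 ∈ Set.Ioo 0 h₃} = 
            Set.Ioo 0 h₁ ×ˢ (Set.Ioo 0 h₂ ×ˢ Set.Ioo 0 h₃) := by
    ext p; simp
  have hFc : Continuous fun p : ℝ × ℝ × ℝ => F !₂[p.1, p.2.1, p.2.2] := hF.comp hc
  rw [hpre]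
  change ∫ p in Set.Ioo 0 h₁ ×ˢ (Set.Ioo 0 h₂ ×ˢ Set.Ioo 0 h₃), F !₂[p.1, p.2.1, p.2.2] ∂((volume : Measure ℝ).prod ((volume : Measure ℝ).prod (volume : Measure ℝ))) = _
  rw [setIntegral_prod]
  · rw [intervalIntegral.integral_of_le hh₁.le, integral_Ioc_eq_integral_Ioo]
    refine setIntegral_congr_fun measurableSet_Ioo fun x _ => ?_
    dsimp only
    rw [setIntegral_prod]
    · rw [intervalIntegral.integral_of_le hh₂.le, integral_Ioc_eq_integral_Ioo]
      refine setIntegral_congr_fun measurableSet_Ioo fun y _ => ?_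
      dsimp only
      rw [intervalIntegral.integral_of_le hh₃.le, integral_Ioc_eq_integral_Ioo]
    · have : IntegrableOn (fun p : ℝ × ℝ => F !₂[x, p.1, p.2]) (Set.Icc 0 h₂ ×ˢ Set.Icc 0 h₃) :=
        ContinuousOn.integrableOn_compact (isCompact_Icc.prod isCompact_Icc)
          (Continuous.continuousOn (hFc.comp (by fun_prop : Continuous fun p : ℝ × ℝ => (x, p.1, p.2))))
      exact this.mono_set (Set.prod_mono Set.Ioo_subset_Icc_self Set.Ioo_subset_Icc_self)
  · have : IntegrableOn (fun p : ℝ × ℝ × ℝ => F !₂[p.1, p.2.1, p.2.2]) (Set.Icc 0 h₁ ×ˢ (Set.Icc 0 h₂ ×ˢ Set.Icc 0 h₃)) :=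
      ContinuousOn.integrableOn_compact (isCompact_Icc.prod (isCompact_Icc.prod isCompact_Icc)) hFc.continuousOn
    exact this.mono_set (Set.prod_mono Set.Ioo_subset_Icc_self (Set.prod_mono Set.Ioo_subset_Icc_self Set.Ioo_subset_Icc_self))

lemma face_int (h₂ h₃ : ℝ) (hh₂ : 0 < h₂) (hh₃ : 0 < h₃) (F : ℝ × ℝ → ℝ) (hF : Continuous F) :
    ∫ p in Set.Ioo (0:ℝ) h₂ ×ˢ Set.Ioo (0:ℝ) h₃, F p = ∫ y in (0:ℝ)..h₂, ∫ z in (0:ℝ)..h₃, F (y, z) := by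
  rw [Measure.volume_eq_prod, setIntegral_prod]
  · rw [intervalIntegral.integral_of_le hh₂.le, integral_Ioc_eq_integral_Ioo]
    refine setIntegral_congr_fun measurableSet_Ioo fun y _ => ?_
    rw [intervalIntegral.integral_of_le hh₃.le, integral_Ioc_eq_integral_Ioo]
  · have : IntegrableOn F (Set.Icc 0 h₂ ×ˢ Set.Icc 0 h₃) :=
      ContinuousOn.integrableOn_compact (isCompact_Icc.prod isCompact_Icc) hF.continuousOn
    exact this.mono_set (Set.prod_mono Set.Ioo_subset_Icc_self Set.Ioo_subset_Icc_self)

lemma mono_ii {h : ℝ} (hh : 0 < h) {f g : ℝ → ℝ} (hf : Continuous f) (hg : Continuous g) (H : ∀ x, f x ≤ g x) :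
    ∫ x in (0:ℝ)..h, f x ≤ ∫ x in (0:ℝ)..h, g x :=
  intervalIntegral.integral_mono_on hh.le (hf.intervalIntegrable _ _) (hg.intervalIntegrable _ _) fun x _ => H x

/-- two-dimensional Neumann Poincare with mean -/
lemma neumann2 {h₂ h₃ : ℝ} (hh₂ : 0 < h₂) (hh₃ : 0 < h₃) (W D1 D2 : ℝ → ℝ → ℝ)
    (hW : Continuous (Function.uncurry W)) (hD1 : Continuous (Function.uncurry D1))
    (hD2 : Continuous (Function.uncurry D2))
    (d1 : ∀ y z, HasDerivAt (fun y => W y z) (D1 y z) y) (d2 : ∀ y z, HasDerivAt (fun z => W y z) (D2 y z) z) :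
    ∫ y in (0:ℝ)..h₂, ∫ z in (0:ℝ)..h₃, W y z ^ 2 ≤ h₃⁻¹ * h₂⁻¹ * (∫ y in (0:ℝ)..h₂, ∫ z in (0:ℝ)..h₃, W y z) ^ 2 +
      (h₂ / π) ^ 2 * (∫ y in (0:ℝ)..h₂, ∫ z in (0:ℝ)..h₃, D1 y z ^ 2) +
      (h₃ / π) ^ 2 * (∫ y in (0:ℝ)..h₂, ∫ z in (0:ℝ)..h₃, D2 y z ^ 2) := by
  have c1 : Continuous fun y => ∫ z in (0:ℝ)..h₃, W y z ^ 2 := par_cont _ (by fun_prop)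
  have c2 : Continuous fun y => ∫ z in (0:ℝ)..h₃, W y z := par_cont _ (by fun_prop)
  have c3 : Continuous fun y => ∫ z in (0:ℝ)..h₃, D2 y z ^ 2 := par_cont _ (by fun_prop)
  have c4 : Continuous fun y => ∫ z in (0:ℝ)..h₃, D1 y z ^ 2 := par_cont _ (by fun_prop)
  have c5 : Continuous fun y => ∫ z in (0:ℝ)..h₃, D1 y z := par_cont _ (by fun_prop)
  have s1 := mono_ii hh₂ c1 (g := fun y => h₃⁻¹ * (∫ z in (0:ℝ)..h₃, W y z) ^ 2 + (h₃ / π) ^ 2 * ∫ z in (0:ℝ)..h₃, D2 y z ^ 2)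
    (by fun_prop) (fun y => neumann hh₃ (W y) (D2 y) (d2 y) (by fun_prop))
  have s2 := neumann hh₂ (fun y => ∫ z in (0:ℝ)..h₃, W y z) (fun y => ∫ z in (0:ℝ)..h₃, D1 y z)
    (fun y => par_deriv W D1 hW hD1 d1 y) c5
  have s3 := mono_ii hh₂ (f := fun y => (∫ z in (0:ℝ)..h₃, D1 y z) ^ 2) (g := fun y => h₃ * ∫ z in (0:ℝ)..h₃, D1 y z ^ 2)
    (by fun_prop) (by fun_prop) (fun y => cs hh₃ (D1 y) (by fun_prop))
  rw [intervalIntegral.integral_add (Continuous.intervalIntegrable (by fun_prop) _ _)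
      (Continuous.intervalIntegrable (by fun_prop) _ _), intervalIntegral.integral_const_mul, intervalIntegral.integral_const_mul] at s1
  rw [intervalIntegral.integral_const_mul] at s3
  have s4 : (h₂ / π) ^ 2 * ∫ y in (0:ℝ)..h₂, (∫ z in (0:ℝ)..h₃, D1 y z) ^ 2 ≤ (h₂ / π) ^ 2 * _ :=
    mul_le_mul_of_nonneg_left s3 (by positivity)
  have s5 := mul_le_mul_of_nonneg_left (s2.trans (add_le_add_right s4 _)) (inv_nonneg.2 hh₃.le)
  have e : h₃⁻¹ * h₃ = 1 := by field_simp
  have e2 : ∀ a b c d : ℝ, h₃⁻¹ * (a * b + c * (h₃ * d)) = h₃⁻¹ * a * b + c * d := fun a b c d => by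
    field_simp
  rw [e2] at s5
  linarith

lemma upper3 {h₁ h₂ h₃ : ℝ} (hh₁ : 0 < h₁) (hh₂ : 0 < h₂) (hh₃ : 0 < h₃) (W D0 D1 D2 : ℝ → ℝ → ℝ → ℝ)
    (hW : Continuous fun p : ℝ × ℝ × ℝ => W p.1 p.2.1 p.2.2) (hD0 : Continuous fun p : ℝ × ℝ × ℝ => D0 p.1 p.2.1 p.2.2)
    (hD1 : Continuous fun p : ℝ × ℝ × ℝ => D1 p.1 p.2.1 p.2.2) (hD2 : Continuous fun p : ℝ × ℝ × ℝ => D2 p.1 p.2.1 p.2.2)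
    (d0 : ∀ x y z, HasDerivAt (fun x => W x y z) (D0 x y z) x)
    (d1 : ∀ x y z, HasDerivAt (fun y => W x y z) (D1 x y z) y) (d2 : ∀ x y z, HasDerivAt (fun z => W x y z) (D2 x y z) z)
    (hz : ∫ y in (0:ℝ)..h₂, ∫ z in (0:ℝ)..h₃, W 0 y z = 0) :
    ∫ x in (0:ℝ)..h₁, ∫ y in (0:ℝ)..h₂, ∫ z in (0:ℝ)..h₃, W x y z ^ 2 ≤
      (π⁻¹ * max (2 * h₁) (max h₂ h₃)) ^ 2 * ∫ x in (0:ℝ)..h₁, ∫ y in (0:ℝ)..h₂, ∫ z in (0:ℝ)..h₃,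
        (D0 x y z ^ 2 + D1 x y z ^ 2 + D2 x y z ^ 2) := by
  have K : ∀ G : ℝ → ℝ → ℝ → ℝ, (Continuous fun p : ℝ × ℝ × ℝ => G p.1 p.2.1 p.2.2) →
      (Continuous fun p : ℝ × ℝ => ∫ z in (0:ℝ)..h₃, G p.1 p.2 z) ∧
      (Continuous fun x => ∫ y in (0:ℝ)..h₂, ∫ z in (0:ℝ)..h₃, G x y z) := by
    intro G hG
    have a : Continuous fun p : ℝ × ℝ => ∫ z in (0:ℝ)..h₃, G p.1 p.2 z :=
      par_cont (fun (p : ℝ × ℝ) z => G p.1 p.2 z)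
        (hG.comp (by fun_prop : Continuous fun q : (ℝ × ℝ) × ℝ => (q.1.1, q.1.2, q.2)))
    exact ⟨a, par_cont (fun x y => ∫ z in (0:ℝ)..h₃, G x y z) a⟩
  have sl : ∀ G : ℝ → ℝ → ℝ → ℝ, (Continuous fun p : ℝ × ℝ × ℝ => G p.1 p.2.1 p.2.2) → ∀ x,
      Continuous (Function.uncurry (G x)) := fun G hG x =>
    hG.comp (by fun_prop : Continuous fun q : ℝ × ℝ => (x, q.1, q.2))
  have sl2 : ∀ G : ℝ → ℝ → ℝ → ℝ, (Continuous fun p : ℝ × ℝ × ℝ => G p.1 p.2.1 p.2.2) → ∀ x y,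
      Continuous (G x y) := fun G hG x y =>
    hG.comp (by fun_prop : Continuous fun q : ℝ => (x, y, q))
  have q : ∀ G : ℝ → ℝ → ℝ → ℝ, (Continuous fun p : ℝ × ℝ × ℝ => G p.1 p.2.1 p.2.2) → 
      (Continuous fun p : ℝ × ℝ × ℝ => G p.1 p.2.1 p.2.2 ^ 2) := fun G hG => hG.pow 2
  have cW := (K _ hW).2
  have cW2 := (K (fun x y z => W x y z ^ 2) (q _ hW)).2
  have c0 := (K _ hD0).2
  have c02 := (K (fun x y z => D0 x y z ^ 2) (q _ hD0)).2
  have c12 := (K (fun x y z => D1 x y z ^ 2) (q _ hD1)).2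
  have c22 := (K (fun x y z => D2 x y z ^ 2) (q _ hD2)).2
  have s1 := mono_ii hh₁ cW2 (g := fun x => h₃⁻¹ * h₂⁻¹ * (∫ y in (0:ℝ)..h₂, ∫ z in (0:ℝ)..h₃, W x y z) ^ 2 +
      (h₂ / π) ^ 2 * (∫ y in (0:ℝ)..h₂, ∫ z in (0:ℝ)..h₃, D1 x y z ^ 2) +
      (h₃ / π) ^ 2 * (∫ y in (0:ℝ)..h₂, ∫ z in (0:ℝ)..h₃, D2 x y z ^ 2)) (by fun_prop)
      (fun x => neumann2 hh₂ hh₃ (W x) (D1 x) (D2 x) (sl _ hW x) (sl _ hD1 x) (sl _ hD2 x) (d1 x) (d2 x))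
  have s2 := half_dirichlet hh₁ (fun x => ∫ y in (0:ℝ)..h₂, ∫ z in (0:ℝ)..h₃, W x y z)
    (fun x => ∫ y in (0:ℝ)..h₂, ∫ z in (0:ℝ)..h₃, D0 x y z)
    (fun x => par_deriv (fun x y => ∫ z in (0:ℝ)..h₃, W x y z) (fun x y => ∫ z in (0:ℝ)..h₃, D0 x y z)
      (K _ hW).1 (K _ hD0).1 (fun x y => par_deriv (fun x z => W x y z) (fun x z => D0 x y z)
        (hW.comp (by fun_prop : Continuous fun q : ℝ × ℝ => (q.1, y, q.2)))
        (hD0.comp (by fun_prop : Continuous fun q : ℝ × ℝ => (q.1, y, q.2))) (fun x z => d0 x y z) x) x) c0 hz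
  have s3 := mono_ii hh₁ (f := fun x => (∫ y in (0:ℝ)..h₂, ∫ z in (0:ℝ)..h₃, D0 x y z) ^ 2)
    (g := fun x => h₂ * h₃ * ∫ y in (0:ℝ)..h₂, ∫ z in (0:ℝ)..h₃, D0 x y z ^ 2) (by fun_prop) (by fun_prop) (fun x => by
      have cx : Continuous fun y => ∫ z in (0:ℝ)..h₃, D0 x y z := par_cont _ (sl _ hD0 x)
      have cx2 : Continuous fun y => ∫ z in (0:ℝ)..h₃, D0 x y z ^ 2 := par_cont _ ((sl _ hD0 x).pow 2)
      have t1 := cs hh₂ (fun y => ∫ z in (0:ℝ)..h₃, D0 x y z) cx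
      have t2 := mono_ii hh₂ (f := fun y => (∫ z in (0:ℝ)..h₃, D0 x y z) ^ 2)
        (g := fun y => h₃ * ∫ z in (0:ℝ)..h₃, D0 x y z ^ 2) (by fun_prop) (by fun_prop)
        (fun y => cs hh₃ (D0 x y) (sl2 _ hD0 x y))
      rw [intervalIntegral.integral_const_mul] at t2
      have := mul_le_mul_of_nonneg_left t2 hh₂.le
      linarith)
  have hsum : ∫ x in (0:ℝ)..h₁, ∫ y in (0:ℝ)..h₂, ∫ z in (0:ℝ)..h₃,
        (D0 x y z ^ 2 + D1 x y z ^ 2 + D2 x y z ^ 2) = 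
      (∫ x in (0:ℝ)..h₁, ∫ y in (0:ℝ)..h₂, ∫ z in (0:ℝ)..h₃, D0 x y z ^ 2) + 
      (∫ x in (0:ℝ)..h₁, ∫ y in (0:ℝ)..h₂, ∫ z in (0:ℝ)..h₃, D1 x y z ^ 2) + 
      (∫ x in (0:ℝ)..h₁, ∫ y in (0:ℝ)..h₂, ∫ z in (0:ℝ)..h₃, D2 x y z ^ 2) := by
    have A : ∀ P Q : ℝ → ℝ, Continuous P → Continuous Q → ∀ h : ℝ,
        ∫ x in (0:ℝ)..h, (P x + Q x) = (∫ x in (0:ℝ)..h, P x) + ∫ x in (0:ℝ)..h, Q x := fun P Q hP hQ h =>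
      intervalIntegral.integral_add (hP.intervalIntegrable _ _) (hQ.intervalIntegrable _ _)
    have B : ∀ P Q : ℝ → ℝ → ℝ → ℝ, (Continuous fun p : ℝ × ℝ × ℝ => P p.1 p.2.1 p.2.2) →
        (Continuous fun p : ℝ × ℝ × ℝ => Q p.1 p.2.1 p.2.2) → 
        ∫ x in (0:ℝ)..h₁, ∫ y in (0:ℝ)..h₂, ∫ z in (0:ℝ)..h₃, (P x y z + Q x y z) =
        (∫ x in (0:ℝ)..h₁, ∫ y in (0:ℝ)..h₂, ∫ z in (0:ℝ)..h₃, P x y z) +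
        ∫ x in (0:ℝ)..h₁, ∫ y in (0:ℝ)..h₂, ∫ z in (0:ℝ)..h₃, Q x y z := by
      intro P Q hP hQ
      rw [← A _ _ (K P hP).2 (K Q hQ).2]
      congr 1; funext x
      rw [← A _ _ (par_cont _ (sl _ hP x)) (par_cont _ (sl _ hQ x))]
      congr 1; funext y
      rw [← A _ _ (sl2 _ hP x y) (sl2 _ hQ x y)]
    rw [B (fun x y z => D0 x y z ^ 2 + D1 x y z ^ 2) (fun x y z => D2 x y z ^ 2) ((q _ hD0).add (q _ hD1)) (q _ hD2),
      B (fun x y z => D0 x y z ^ 2) (fun x y z => D1 x y z ^ 2) (q _ hD0) (q _ hD1)]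
  have nn : ∀ G : ℝ → ℝ → ℝ → ℝ, 0 ≤ ∫ x in (0:ℝ)..h₁, ∫ y in (0:ℝ)..h₂, ∫ z in (0:ℝ)..h₃, G x y z ^ 2 := fun G =>
    intervalIntegral.integral_nonneg hh₁.le fun x _ => intervalIntegral.integral_nonneg hh₂.le fun y _ =>
      intervalIntegral.integral_nonneg hh₃.le fun z _ => sq_nonneg _
  have n0 := nn D0
  have n1 := nn D1
  have n2 := nn D2
  rw [hsum]
  rw [intervalIntegral.integral_const_mul] at s3
  rw [intervalIntegral.integral_add (Continuous.intervalIntegrable (by fun_prop) _ _)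
      (Continuous.intervalIntegrable (by fun_prop) _ _), intervalIntegral.integral_add (Continuous.intervalIntegrable (by fun_prop) _ _)
      (Continuous.intervalIntegrable (by fun_prop) _ _), intervalIntegral.integral_const_mul, intervalIntegral.integral_const_mul,
      intervalIntegral.integral_const_mul] at s1
  generalize (∫ x in (0:ℝ)..h₁, ∫ y in (0:ℝ)..h₂, ∫ z in (0:ℝ)..h₃, D0 x y z ^ 2) = I0 at *
  generalize (∫ x in (0:ℝ)..h₁, ∫ y in (0:ℝ)..h₂, ∫ z in (0:ℝ)..h₃, D1 x y z ^ 2) = I1 at *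
  generalize (∫ x in (0:ℝ)..h₁, ∫ y in (0:ℝ)..h₂, ∫ z in (0:ℝ)..h₃, D2 x y z ^ 2) = I2 at *
  generalize (∫ x in (0:ℝ)..h₁, (∫ y in (0:ℝ)..h₂, ∫ z in (0:ℝ)..h₃, W x y z) ^ 2) = Iw at *
  set M := max (2 * h₁) (max h₂ h₃) with hM
  have M1 : 2 * h₁ ≤ M := le_max_left _ _
  have M2 : h₂ ≤ M := (le_max_left _ _).trans (le_max_right _ _)
  have M3 : h₃ ≤ M := (le_max_right _ _).trans (le_max_right _ _)
  have s4 := mul_le_mul_of_nonneg_left (s2.trans s3) (by positivity : 0 ≤ h₃⁻¹ * h₂⁻¹ * (2 * h₁ / π) ^ 2)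
  have e1 : h₃⁻¹ * h₂⁻¹ * (2 * h₁ / π) ^ 2 * ((π / (2 * h₁)) ^ 2 * Iw) = h₃⁻¹ * h₂⁻¹ * Iw := by field_simp
  have e2 : h₃⁻¹ * h₂⁻¹ * (2 * h₁ / π) ^ 2 * (h₂ * h₃ * I0) = (π⁻¹ * (2 * h₁)) ^ 2 * I0 := by field_simp
  rw [e1, e2] at s4
  have B : ∀ a I : ℝ, 0 < a → a ≤ M → 0 ≤ I → (π⁻¹ * a) ^ 2 * I ≤ (π⁻¹ * M) ^ 2 * I := by
    intro a I ha haM hI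
    gcongr
  have b0 := B _ _ (by positivity) M1 n0
  have b1 := B _ _ hh₂ M2 n1
  have b2 := B _ _ hh₃ M3 n2
  have e3 : ∀ a : ℝ, a / π = π⁻¹ * a := fun a => by rw [div_eq_inv_mul]
  rw [e3, e3] at s1
  linarith

lemma norm_grad (w : E3 → ℝ) (x : E3) :
    ‖gradient w x‖ ^ 2 = (fderiv ℝ w x (EuclideanSpace.single 0 1)) ^ 2 + (fderiv ℝ w x (EuclideanSpace.single 1 1)) ^ 2
      + (fderiv ℝ w x (EuclideanSpace.single 2 1)) ^ 2 := by
  have : ∀ i, gradient w x i = fderiv ℝ w x (EuclideanSpace.single i 1) := by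
    intro i
    have h : inner ℝ (gradient w x) (EuclideanSpace.single i (1:ℝ)) = fderiv ℝ w x (EuclideanSpace.single i 1) := by
      simp [gradient]
    rw [← h, EuclideanSpace.inner_single_right]
    simp
  rw [EuclideanSpace.real_norm_sq_eq, Fin.sum_univ_three, this, this, this]

lemma line_deriv (c : ℝ → E3) (i : Fin 3) (t : ℝ) (hc : ∀ s, c s = c t + (s - t) • EuclideanSpace.single i (1:ℝ))
    (w : E3 → ℝ) (hw : Differentiable ℝ w) :
    HasDerivAt (fun s => w (c s)) (fderiv ℝ w (c t) (EuclideanSpace.single i 1)) t := by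
  have h1 : HasDerivAt c (EuclideanSpace.single i (1:ℝ)) t := by
    have : HasDerivAt (fun s : ℝ => c t + (s - t) • EuclideanSpace.single i (1:ℝ)) ((1:ℝ) • EuclideanSpace.single i (1:ℝ)) t :=
      (((hasDerivAt_id t).sub_const t).smul_const _).const_add _
    rw [one_smul] at this
    exact this.congr_of_eventuallyEq (Filter.Eventually.of_forall hc)
  exact (hw (c t)).hasFDerivAt.comp_hasDerivAt t h1

lemma trig_int {h k : ℝ} (hk : k ≠ 0) (hs : sin (k * h) * cos (k * h) = 0) :
    (∫ x in (0:ℝ)..h, cos (k * x) ^ 2 = h / 2) ∧ (∫ x in (0:ℝ)..h, sin (k * x) ^ 2 = h / 2) := by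
  have e1 : ∀ x, HasDerivAt (fun x => k * x) k x := fun x => by simpa using (hasDerivAt_id x).const_mul k
  have hd : ∀ x, HasDerivAt (fun x => sin (k * x) * cos (k * x) / (2 * k)) ((cos (k * x) ^ 2 - sin (k * x) ^ 2) / 2) x := by
    intro x
    refine (((e1 x).sin.mul (e1 x).cos).div_const (2 * k)).congr_deriv ?_
    field_simp
    ring
  have hx : ∀ x, HasDerivAt (fun x : ℝ => x / 2) (1 / 2) x := fun x => (hasDerivAt_id x).div_const 2
  constructor
  · rw [intervalIntegral.integral_eq_sub_of_hasDerivAt (f := fun x => x / 2 + sin (k * x) * cos (k * x) / (2 * k))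
      (fun x _ => ((hx x).add (hd x)).congr_deriv (by linarith [sin_sq_add_cos_sq (k * x)]))
      (Continuous.intervalIntegrable (by fun_prop) _ _)]
    simp [hs]
  · rw [intervalIntegral.integral_eq_sub_of_hasDerivAt (f := fun x => x / 2 - sin (k * x) * cos (k * x) / (2 * k))
      (fun x _ => ((hx x).sub (hd x)).congr_deriv (by linarith [sin_sq_add_cos_sq (k * x)]))
      (Continuous.intervalIntegrable (by fun_prop) _ _)]
    simp [hs]

lemma grad_coord (g g' : ℝ → ℝ) (hg : ∀ t, HasDerivAt g (g' t) t) (i : Fin 3) (x : E3) :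
    ‖gradient (fun x : E3 => g (x i)) x‖ ^ 2 = g' (x i) ^ 2 := by
  have h1 : HasFDerivAt (fun x : E3 => x i) (EuclideanSpace.proj i : E3 →L[ℝ] ℝ) x :=
    (EuclideanSpace.proj i : E3 →L[ℝ] ℝ).hasFDerivAt
  have h2 := (hg (x i)).comp_hasFDerivAt x h1
  have h3 : fderiv ℝ (fun x : E3 => g (x i)) x = _ := h2.fderiv
  rw [norm_grad, h3]
  fin_cases i <;> simp

lemma lower_alg {C P Q k : ℝ} (hk : 0 < k) (hP : 0 < P) (hQ : Q = k ^ 2 * P) (h : √P ≤ C * √Q) : k⁻¹ ≤ C := by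
  rw [hQ, Real.sqrt_mul (by positivity), Real.sqrt_sq hk.le] at h
  have : 0 < √P := Real.sqrt_pos.2 hP
  rw [inv_le_iff_one_le_mul₀ hk]
  by_contra hc
  push Not at hc
  nlinarith

theorem box_one_face_C1 (h₁ h₂ h₃ : ℝ) (hh₁ : 0 < h₁) (hh₂ : 0 < h₂) (hh₃ : 0 < h₃) :
    IsLeast {C : ℝ |
      ∀ w : EuclideanSpace ℝ (Fin 3) → ℝ, ContDiff ℝ 1 w →
        (∫ p in Set.Ioo (0:ℝ) h₂ ×ˢ Set.Ioo (0:ℝ) h₃, w !₂[0, p.1, p.2]) = 0 →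
        Real.sqrt (∫ x in {x : EuclideanSpace ℝ (Fin 3) |
            x 0 ∈ Set.Ioo 0 h₁ ∧ x 1 ∈ Set.Ioo 0 h₂ ∧ x 2 ∈ Set.Ioo 0 h₃},
            (w x) ^ 2) ≤
          C * Real.sqrt (∫ x in {x : EuclideanSpace ℝ (Fin 3) |
            x 0 ∈ Set.Ioo 0 h₁ ∧ x 1 ∈ Set.Ioo 0 h₂ ∧ x 2 ∈ Set.Ioo 0 h₃},
            ‖gradient w x‖ ^ 2)}
      (π⁻¹ * max (2 * h₁) (max h₂ h₃)) := by
  have cface : Continuous fun p : ℝ × ℝ => (!₂[0, p.1, p.2] : E3) :=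
    cont3.comp (by fun_prop : Continuous fun p : ℝ × ℝ => ((0:ℝ), p.1, p.2))
  constructor
  · intro w hw hz
    have hwc : Continuous w := hw.continuous
    have hwd : Differentiable ℝ w := hw.differentiable (by norm_num)
    have hfd : Continuous (fderiv ℝ w) := hw.continuous_fderiv (by norm_num)
    have hD : ∀ i, Continuous fun x => fderiv ℝ w x (EuclideanSpace.single i 1) := fun i =>
      hfd.clm_apply continuous_const
    have hM : 0 < max (2 * h₁) (max h₂ h₃) := lt_max_of_lt_left (by positivity)
    rw [face_int h₂ h₃ hh₂ hh₃ (fun p => w !₂[0, p.1, p.2]) (hwc.comp cface)] at hz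
    simp_rw [norm_grad]
    have hD0 := hD 0
    have hD1 := hD 1
    have hD2 := hD 2
    rw [box_int h₁ h₂ h₃ hh₁ hh₂ hh₃ (fun x => w x ^ 2) (hwc.pow 2),
      box_int h₁ h₂ h₃ hh₁ hh₂ hh₃ _ (by fun_prop)]
    have key := upper3 hh₁ hh₂ hh₃ (fun x y z => w !₂[x, y, z])
      (fun x y z => fderiv ℝ w !₂[x, y, z] (EuclideanSpace.single 0 1))
      (fun x y z => fderiv ℝ w !₂[x, y, z] (EuclideanSpace.single 1 1))
      (fun x y z => fderiv ℝ w !₂[x, y, z] (EuclideanSpace.single 2 1))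
      (hwc.comp cont3) (hD0.comp cont3) (hD1.comp cont3) (hD2.comp cont3)
      (fun x y z => line_deriv (fun t => !₂[t, y, z]) 0 x (fun s => by ext i; fin_cases i <;> simp) w hwd)
      (fun x y z => line_deriv (fun t => !₂[x, t, z]) 1 y (fun s => by ext i; fin_cases i <;> simp) w hwd)
      (fun x y z => line_deriv (fun t => !₂[x, y, t]) 2 z (fun s => by ext i; fin_cases i <;> simp) w hwd)
      hz
    refine (Real.sqrt_le_sqrt key).trans ?_
    rw [Real.sqrt_mul (by positivity), Real.sqrt_sq (by positivity)]
  · intro C hC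
    -- test functions
    have pp := pi_pos
    have L0 : π⁻¹ * (2 * h₁) ≤ C := by
      set k := π / (2 * h₁) with hk
      have hk0 : 0 < k := by positivity
      have hkh : k * h₁ = π / 2 := by rw [hk]; field_simp
      have hd : ∀ t, HasDerivAt (fun t => sin (k * t)) (k * cos (k * t)) t := fun t => by
        simpa [mul_comm] using ((hasDerivAt_id t).const_mul k).sin
      have := hC (fun x => sin (k * x 0)) (by fun_prop) (by simp)
      have ti := trig_int (h := h₁) hk0.ne' (by rw [hkh]; simp)
      have e : (fun x : E3 => ‖gradient (fun x : E3 => sin (k * x 0)) x‖ ^ 2) = fun x : E3 => (k * cos (k * x 0)) ^ 2 := by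
        funext x; exact grad_coord (fun t => sin (k * t)) (fun t => k * cos (k * t)) hd 0 x
      rw [e, box_int h₁ h₂ h₃ hh₁ hh₂ hh₃ _ (by fun_prop), box_int h₁ h₂ h₃ hh₁ hh₂ hh₃ _ (by fun_prop)] at this
      simp [mul_pow, ti.1, ti.2, -Real.sqrt_mul', -Real.sqrt_mul, -Real.sqrt_div', -Real.sqrt_div] at this
      have r := lower_alg (k := k) hk0 (by positivity) (by ring) this
      rw [hk, inv_div] at r
      rwa [← div_eq_inv_mul]
    have L1 : π⁻¹ * h₂ ≤ C := by
      set k := π / h₂ with hk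
      have hk0 : 0 < k := by positivity
      have hkh : k * h₂ = π := by rw [hk]; field_simp
      have hd : ∀ t, HasDerivAt (fun t => cos (k * t)) (-(k * sin (k * t))) t := fun t => by
        simpa [mul_comm] using ((hasDerivAt_id t).const_mul k).cos
      have := hC (fun x => cos (k * x 1)) (by fun_prop) (by
        rw [face_int h₂ h₃ hh₂ hh₃ (fun p => cos (k * (!₂[0, p.1, p.2] : E3) 1)) (by simp; fun_prop)]
        simp [hk0.ne', hkh])
      have ti := trig_int (h := h₂) hk0.ne' (by rw [hkh]; simp)
      have e : (fun x : E3 => ‖gradient (fun x : E3 => cos (k * x 1)) x‖ ^ 2) = fun x : E3 => (-(k * sin (k * x 1))) ^ 2 := by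
        funext x; exact grad_coord (fun t => cos (k * t)) (fun t => -(k * sin (k * t))) hd 1 x
      rw [e, box_int h₁ h₂ h₃ hh₁ hh₂ hh₃ _ (by fun_prop), box_int h₁ h₂ h₃ hh₁ hh₂ hh₃ _ (by fun_prop)] at this
      simp [mul_pow, ti.1, ti.2, -Real.sqrt_mul', -Real.sqrt_mul, -Real.sqrt_div', -Real.sqrt_div] at this
      have r := lower_alg (k := k) hk0 (by positivity) (by ring) this
      rw [hk, inv_div] at r
      rwa [← div_eq_inv_mul]
    have L2 : π⁻¹ * h₃ ≤ C := by
      set k := π / h₃ with hk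
      have hk0 : 0 < k := by positivity
      have hkh : k * h₃ = π := by rw [hk]; field_simp
      have hd : ∀ t, HasDerivAt (fun t => cos (k * t)) (-(k * sin (k * t))) t := fun t => by
        simpa [mul_comm] using ((hasDerivAt_id t).const_mul k).cos
      have := hC (fun x => cos (k * x 2)) (by fun_prop) (by
        rw [face_int h₂ h₃ hh₂ hh₃ (fun p => cos (k * (!₂[0, p.1, p.2] : E3) 2)) (by simp; fun_prop)]
        simp [hk0.ne', hkh])
      have ti := trig_int (h := h₃) hk0.ne' (by rw [hkh]; simp)
      have e : (fun x : E3 => ‖gradient (fun x : E3 => cos (k * x 2)) x‖ ^ 2) = fun x : E3 => (-(k * sin (k * x 2))) ^ 2 := by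
        funext x; exact grad_coord (fun t => cos (k * t)) (fun t => -(k * sin (k * t))) hd 2 x
      rw [e, box_int h₁ h₂ h₃ hh₁ hh₂ hh₃ _ (by fun_prop), box_int h₁ h₂ h₃ hh₁ hh₂ hh₃ _ (by fun_prop)] at this
      simp [mul_pow, ti.1, ti.2, -Real.sqrt_mul', -Real.sqrt_mul, -Real.sqrt_div', -Real.sqrt_div] at this
      have r := lower_alg (k := k) hk0 (by positivity) (by ring) this
      rw [hk, inv_div] at r
      rwa [← div_eq_inv_mul]
    rcases max_choice (2 * h₁) (max h₂ h₃) with h | h <;> rw [h]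
    · exact L0
    · rcases max_choice h₂ h₃ with h' | h' <;> rw [h'] <;> assumption
end

section
/- Let Ω = (0,h₁)×(0,h₂)×(0,h₃) with h₁,h₂,h₃ > 0 and Γ = ∂Ω ∩ {x₁ = 0} (one face of the parallelepiped), and set m = max{h₂, h₃}. Then the sharp constant C₂(Ω,Γ) in the inequality ‖w‖_{L²(Γ)} ≤ C₂‖∇w‖_{L²(Ω)} for all w ∈ H̃¹(Ω,Γ) is equal to ((π/m)·tanh(π h₁/m))^{-1/2}. -/
open MeasureTheory Real

lemma aux_dirichlet (F f : ℝ → ℝ) (L κ : ℝ) (hL : 0 < L) (hκ : 0 < κ) (hκL : κ * L < π)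
    (hF : ∀ x, HasDerivAt F (f x) x) (hf : Continuous f) (h0 : F 0 = 0) (h1 : F L = 0) :
    κ ^ 2 * (∫ x in (0:ℝ)..L, F x ^ 2) ≤ ∫ x in (0:ℝ)..L, f x ^ 2 := by
  have hFc : Continuous F := continuous_iff_continuousAt.2 fun x => (hF x).continuousAt
  set ψ : ℝ → ℝ := fun x => κ * Real.tan (κ * (L / 2 - x)) with hψ
  have hcos : ∀ x ∈ Set.uIcc 0 L, 0 < Real.cos (κ * (L / 2 - x)) := by
    intro x hx
    rw [Set.uIcc_of_le hL.le] at hx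
    apply Real.cos_pos_of_mem_Ioo
    constructor <;> nlinarith [hx.1, hx.2]
  have hder : ∀ x ∈ Set.uIcc 0 L, HasDerivAt (fun x => ψ x * F x ^ 2)
      ((-κ ^ 2 - ψ x ^ 2) * F x ^ 2 + 2 * ψ x * F x * f x) x := by
    intro x hx
    have hc := hcos x hx
    have e1 : HasDerivAt (fun x => κ * (L / 2 - x)) (κ * (0 - 1)) x :=
      ((hasDerivAt_const x (L/2)).sub (hasDerivAt_id x)).const_mul κ
    have e2 := ((Real.hasDerivAt_tan hc.ne').comp x e1).const_mul κ
    have e3 := e2.mul ((hF x).pow 2)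
    refine e3.congr_deriv ?_
    have : 1 / Real.cos (κ * (L / 2 - x)) ^ 2 = 1 + Real.tan (κ * (L / 2 - x)) ^ 2 := by
      generalize κ * (L / 2 - x) = t at hc
      rw [Real.tan_eq_sin_div_cos]
      field_simp
      rw [Real.cos_sq_add_sin_sq]
    simp only [hψ, Function.comp, this]
    simp
    ring
  have hψc : ContinuousOn ψ (Set.uIcc 0 L) := by
    intro x hx
    have hc := hcos x hx
    have e1 : HasDerivAt (fun x => κ * (L / 2 - x)) (κ * (0 - 1)) x :=
      ((hasDerivAt_const x (L/2)).sub (hasDerivAt_id x)).const_mul κ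
    exact (((Real.hasDerivAt_tan hc.ne').comp x e1).const_mul κ).continuousAt.continuousWithinAt
  have hint : IntervalIntegrable
      (fun x => (-κ ^ 2 - ψ x ^ 2) * F x ^ 2 + 2 * ψ x * F x * f x) volume 0 L := by
    apply ContinuousOn.intervalIntegrable
    have := hFc.continuousOn (s := Set.uIcc 0 L)
    have := hf.continuousOn (s := Set.uIcc 0 L)
    fun_prop
  have hFTC := intervalIntegral.integral_eq_sub_of_hasDerivAt hder hint
  simp only [h0, h1] at hFTC
  have hmono : (∫ x in (0:ℝ)..L, ((-κ ^ 2 - ψ x ^ 2) * F x ^ 2 + 2 * ψ x * F x * f x)) ≤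
      ∫ x in (0:ℝ)..L, (f x ^ 2 - κ ^ 2 * F x ^ 2) := by
    apply intervalIntegral.integral_mono_on hL.le hint
    · apply Continuous.intervalIntegrable; fun_prop
    · intro x _
      nlinarith [sq_nonneg (f x - ψ x * F x)]
  rw [hFTC, intervalIntegral.integral_sub, intervalIntegral.integral_const_mul] at hmono
  · simp at hmono; linarith
  · apply Continuous.intervalIntegrable; fun_prop
  · apply Continuous.intervalIntegrable; fun_prop

lemma aux_neumann0 (f f' : ℝ → ℝ) (L κ : ℝ) (hL : 0 < L) (hκ : 0 < κ) (hκL : κ * L < π)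
    (hF : ∀ x, HasDerivAt f (f' x) x) (hf' : Continuous f') (h0 : (∫ x in (0:ℝ)..L, f x) = 0) :
    κ ^ 2 * (∫ x in (0:ℝ)..L, f x ^ 2) ≤ ∫ x in (0:ℝ)..L, f' x ^ 2 := by
  have hf : Continuous f := continuous_iff_continuousAt.2 fun x => (hF x).continuousAt
  set F : ℝ → ℝ := fun x => ∫ t in (0:ℝ)..x, f t with hFdef
  have hFd : ∀ x, HasDerivAt F (f x) x := fun x =>
    (hf.integral_hasStrictDerivAt 0 x).hasDerivAt
  have hFc : Continuous F := continuous_iff_continuousAt.2 fun x => (hFd x).continuousAt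
  have hF0 : F 0 = 0 := by simp [hFdef]
  have hD := aux_dirichlet F f L κ hL hκ hκL hFd hf hF0 h0
  have hFTC : (∫ x in (0:ℝ)..L, (f x * f x + F x * f' x)) = F L * f L - F 0 * f 0 := by
    apply intervalIntegral.integral_eq_sub_of_hasDerivAt
    · intro x _
      exact (hFd x).mul (hF x)
    · apply Continuous.intervalIntegrable; fun_prop
  have hFL : F L = 0 := h0
  rw [hFL, hF0] at hFTC
  have hmono : (∫ x in (0:ℝ)..L, 2 * (f x * f x + F x * f' x)) ≥
      ∫ x in (0:ℝ)..L, (2 * f x ^ 2 - (κ ^ 2 * F x ^ 2 + (1 / κ ^ 2) * f' x ^ 2)) := by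
    apply intervalIntegral.integral_mono_on hL.le
    · apply Continuous.intervalIntegrable; fun_prop
    · apply Continuous.intervalIntegrable; fun_prop
    · intro x _
      have : κ ^ 2 * F x ^ 2 + (1 / κ ^ 2) * f' x ^ 2 + 2 * F x * f' x =
        (κ * F x + (1 / κ) * f' x) ^ 2 := by field_simp; ring
      nlinarith [sq_nonneg (κ * F x + (1 / κ) * f' x)]
  rw [intervalIntegral.integral_const_mul, hFTC, intervalIntegral.integral_sub,
    intervalIntegral.integral_add, intervalIntegral.integral_const_mul,
    intervalIntegral.integral_const_mul, intervalIntegral.integral_const_mul] at hmono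
  · have h2 : (∫ x in (0:ℝ)..L, f x ^ 2) ≤ 1 / κ ^ 2 * ∫ x in (0:ℝ)..L, f' x ^ 2 := by linarith
    rw [one_div, inv_mul_eq_div, le_div_iff₀ (by positivity)] at h2
    linarith
  all_goals apply Continuous.intervalIntegrable; fun_prop

/-- sharp Poincare inequality on an interval -/
lemma aux_neumann (f f' : ℝ → ℝ) (L k : ℝ) (hL : 0 < L) (hk : 0 < k) (hkL : k * L ≤ π)
    (hF : ∀ x, HasDerivAt f (f' x) x) (hf' : Continuous f') :
    k ^ 2 * ((∫ x in (0:ℝ)..L, f x ^ 2) - (∫ x in (0:ℝ)..L, f x) ^ 2 / L) ≤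
      ∫ x in (0:ℝ)..L, f' x ^ 2 := by
  have hf : Continuous f := continuous_iff_continuousAt.2 fun x => (hF x).continuousAt
  set c := (∫ x in (0:ℝ)..L, f x) / L with hc
  have hcL : (∫ x in (0:ℝ)..L, f x) = c * L := by rw [hc]; field_simp
  have e : (∫ x in (0:ℝ)..L, (f x - c) ^ 2) =
      (∫ x in (0:ℝ)..L, f x ^ 2) - (∫ x in (0:ℝ)..L, f x) ^ 2 / L := by
    have : (fun x => (f x - c) ^ 2) = fun x => f x ^ 2 - (2 * c) * f x + c ^ 2 := by
      funext x; ring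
    rw [this, intervalIntegral.integral_add, intervalIntegral.integral_sub,
      intervalIntegral.integral_const_mul, hcL]
    · simp; field_simp; ring
    all_goals apply Continuous.intervalIntegrable; fun_prop
  rw [← e]
  have key : ∀ κ ∈ Set.Ioo 0 k, κ ^ 2 * (∫ x in (0:ℝ)..L, (f x - c) ^ 2) ≤
      ∫ x in (0:ℝ)..L, f' x ^ 2 := by
    intro κ hκ
    apply aux_neumann0 (fun x => f x - c) f' L κ hL hκ.1
    · nlinarith [hκ.2]
    · intro x; exact (hF x).sub_const c
    · exact hf'
    · rw [intervalIntegral.integral_sub, hcL]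
      · simp; ring
      all_goals apply Continuous.intervalIntegrable; fun_prop
  have ht : Filter.Tendsto (fun κ : ℝ => κ ^ 2 * (∫ x in (0:ℝ)..L, (f x - c) ^ 2))
      (nhdsWithin k (Set.Iio k)) (nhds (k ^ 2 * (∫ x in (0:ℝ)..L, (f x - c) ^ 2))) := by
    apply tendsto_nhdsWithin_of_tendsto_nhds
    exact Continuous.tendsto (by fun_prop) k
  exact le_of_tendsto ht (Filter.eventually_of_mem (Ioo_mem_nhdsLT hk) key)

/-- differentiation under the integral sign -/
lemma aux_deriv_int (g g' : ℝ → ℝ → ℝ) (a b : ℝ)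
    (hg : Continuous fun p : ℝ × ℝ => g p.1 p.2) (hg' : Continuous fun p : ℝ × ℝ => g' p.1 p.2)
    (hd : ∀ x y, HasDerivAt (fun x => g x y) (g' x y) x) (x : ℝ) :
    HasDerivAt (fun x => ∫ y in a..b, g x y) (∫ y in a..b, g' x y) x := by
  obtain ⟨B, hB⟩ := ((isCompact_Icc (a := x - 1) (b := x + 1)).prod
    (isCompact_uIcc (a := a) (b := b))).exists_bound_of_continuousOn hg'.continuousOn
  refine (intervalIntegral.hasDerivAt_integral_of_dominated_loc_of_deriv_le (bound := fun _ => B)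
    (s := Set.Icc (x - 1) (x + 1)) (Icc_mem_nhds (by linarith) (by linarith))
    ?_ ?_ ?_ ?_ ?_ ?_).2
  · refine Filter.Eventually.of_forall fun x => ?_
    exact Continuous.aestronglyMeasurable (by fun_prop)
  · apply Continuous.intervalIntegrable; fun_prop
  · exact Continuous.aestronglyMeasurable (by fun_prop)
  · refine Filter.Eventually.of_forall fun t ht s hs => ?_
    exact hB (s, t) ⟨hs, Set.uIoc_subset_uIcc ht⟩
  · simp
  · exact Filter.Eventually.of_forall fun t ht s hs => hd s t

lemma aux_cs (g : ℝ → ℝ) (a : ℝ) (ha : 0 < a) (hg : Continuous g) :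
    (∫ y in (0:ℝ)..a, g y) ^ 2 ≤ a * ∫ y in (0:ℝ)..a, g y ^ 2 := by
  set c := (∫ x in (0:ℝ)..a, g x) / a with hc
  have hcL : (∫ x in (0:ℝ)..a, g x) = c * a := by rw [hc]; field_simp
  have e : (∫ x in (0:ℝ)..a, (g x - c) ^ 2) =
      (∫ x in (0:ℝ)..a, g x ^ 2) - (∫ x in (0:ℝ)..a, g x) ^ 2 / a := by
    have : (fun x => (g x - c) ^ 2) = fun x => g x ^ 2 - (2 * c) * g x + c ^ 2 := by
      funext x; ring
    rw [this, intervalIntegral.integral_add, intervalIntegral.integral_sub,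
      intervalIntegral.integral_const_mul, hcL]
    · simp; field_simp; ring
    all_goals apply Continuous.intervalIntegrable; fun_prop
  have h0 : 0 ≤ (∫ x in (0:ℝ)..a, (g x - c) ^ 2) :=
    intervalIntegral.integral_nonneg ha.le fun x _ => sq_nonneg _
  rw [e, sub_nonneg, div_le_iff₀ ha] at h0
  linarith

noncomputable def auxI2 (a b : ℝ) (f : ℝ → ℝ → ℝ) : ℝ := ∫ y in (0:ℝ)..a, ∫ z in (0:ℝ)..b, f y z

lemma auxI2_add (a b : ℝ) (f g : ℝ → ℝ → ℝ) (hf : Continuous fun p : ℝ × ℝ => f p.1 p.2)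
    (hg : Continuous fun p : ℝ × ℝ => g p.1 p.2) :
    auxI2 a b (fun y z => f y z + g y z) = auxI2 a b f + auxI2 a b g := by
  unfold auxI2
  rw [← intervalIntegral.integral_add]
  · congr 1; funext y
    rw [← intervalIntegral.integral_add]
    all_goals apply Continuous.intervalIntegrable; fun_prop
  all_goals apply Continuous.intervalIntegrable; fun_prop

lemma auxI2_smul (a b c : ℝ) (f : ℝ → ℝ → ℝ) :
    auxI2 a b (fun y z => c * f y z) = c * auxI2 a b f := by
  unfold auxI2
  simp only [intervalIntegral.integral_const_mul]

lemma auxI2_const (a b c : ℝ) : auxI2 a b (fun _ _ => c) = c * (a * b) := by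
  unfold auxI2
  simp; ring

lemma auxI2_nonneg (a b : ℝ) (ha : 0 ≤ a) (hb : 0 ≤ b) (f : ℝ → ℝ → ℝ) (hf : ∀ y z, 0 ≤ f y z) :
    0 ≤ auxI2 a b f := 
  intervalIntegral.integral_nonneg ha fun y _ => 
    intervalIntegral.integral_nonneg hb fun z _ => hf y z

lemma auxI2_poincare (a b k : ℝ) (ha : 0 < a) (hb : 0 < b) (hk : 0 < k) (hka : k * a ≤ π)
    (hkb : k * b ≤ π) (f fy fz : ℝ → ℝ → ℝ) (hf : Continuous fun p : ℝ × ℝ => f p.1 p.2)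
    (hfy : Continuous fun p : ℝ × ℝ => fy p.1 p.2) (hfz : Continuous fun p : ℝ × ℝ => fz p.1 p.2)
    (hdy : ∀ y z, HasDerivAt (fun y => f y z) (fy y z) y)
    (hdz : ∀ y z, HasDerivAt (fun z => f y z) (fz y z) z) :
    k ^ 2 * (auxI2 a b (fun y z => f y z ^ 2) - (auxI2 a b f) ^ 2 / (a * b)) ≤
      auxI2 a b (fun y z => fy y z ^ 2) + auxI2 a b (fun y z => fz y z ^ 2) := by
  set G : ℝ → ℝ := fun y => ∫ z in (0:ℝ)..b, f y z with hG
  set G' : ℝ → ℝ := fun y => ∫ z in (0:ℝ)..b, fy y z with hG'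
  have hGd : ∀ y, HasDerivAt G (G' y) y := fun y => aux_deriv_int f fy 0 b hf hfy hdy y
  have hGc : Continuous G := by rw [hG]; fun_prop
  have hGc' : Continuous G' := by rw [hG']; fun_prop
  have p1 := aux_neumann G G' a k ha hk hka hGd hGc'
  have p2 : (∫ y in (0:ℝ)..a, G' y ^ 2) ≤ b * auxI2 a b (fun y z => fy y z ^ 2) := by
    unfold auxI2
    rw [← intervalIntegral.integral_const_mul]
    apply intervalIntegral.integral_mono_on ha.le
    · apply Continuous.intervalIntegrable; fun_prop
    · apply Continuous.intervalIntegrable; fun_prop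
    · intro y _
      exact aux_cs (fun z => fy y z) b hb (by fun_prop)
  have p3 : (∫ y in (0:ℝ)..a, k ^ 2 * ((∫ z in (0:ℝ)..b, f y z ^ 2) - G y ^ 2 / b)) ≤
      auxI2 a b (fun y z => fz y z ^ 2) := by
    unfold auxI2
    apply intervalIntegral.integral_mono_on ha.le
    · apply Continuous.intervalIntegrable; fun_prop
    · apply Continuous.intervalIntegrable; fun_prop
    · intro y _
      exact aux_neumann (fun z => f y z) (fun z => fz y z) b k hb hk hkb (hdz y) (by fun_prop)
  rw [intervalIntegral.integral_const_mul, intervalIntegral.integral_sub,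
    intervalIntegral.integral_div] at p3
  rotate_left
  · apply Continuous.intervalIntegrable; fun_prop
  · apply Continuous.intervalIntegrable; fun_prop
  change k ^ 2 * (auxI2 a b (fun y z => f y z ^ 2) - (∫ y in (0:ℝ)..a, G y ^ 2) / b) ≤ _ at p3
  change k ^ 2 * ((∫ y in (0:ℝ)..a, G y ^ 2) - (auxI2 a b f) ^ 2 / a) ≤ _ at p1
  have p4 := p1.trans p2
  have p5 : k ^ 2 * ((∫ y in (0:ℝ)..a, G y ^ 2) - (auxI2 a b f) ^ 2 / a) / b ≤
    auxI2 a b (fun y z => fy y z ^ 2) := by rw [div_le_iff₀ hb]; linarith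
  have e : k ^ 2 * (auxI2 a b (fun y z => f y z ^ 2) - (auxI2 a b f) ^ 2 / (a * b)) =
    k ^ 2 * (auxI2 a b (fun y z => f y z ^ 2) - (∫ y in (0:ℝ)..a, G y ^ 2) / b) +
    k ^ 2 * ((∫ y in (0:ℝ)..a, G y ^ 2) - (auxI2 a b f) ^ 2 / a) / b := by field_simp; ring
  rw [e]; linarith

lemma auxI2_deriv (a b : ℝ) (u ux : ℝ → ℝ → ℝ → ℝ)
    (hu : Continuous fun p : ℝ × ℝ × ℝ => u p.1 p.2.1 p.2.2)
    (hux : Continuous fun p : ℝ × ℝ × ℝ => ux p.1 p.2.1 p.2.2)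
    (hdx : ∀ x y z, HasDerivAt (fun x => u x y z) (ux x y z) x) (x : ℝ) :
    HasDerivAt (fun x => auxI2 a b (u x)) (auxI2 a b (ux x)) x := by
  unfold auxI2
  apply aux_deriv_int (fun x y => ∫ z in (0:ℝ)..b, u x y z) (fun x y => ∫ z in (0:ℝ)..b, ux x y z)
  · fun_prop
  · fun_prop
  · intro x y
    apply aux_deriv_int (fun x z => u x y z) (fun x z => ux x y z)
    · fun_prop
    · fun_prop
    · intro x z; exact hdx x y z

lemma aux_tanh (k h x : ℝ) : HasDerivAt (fun x => k * Real.tanh (k * (h - x)))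
    ((k * Real.tanh (k * (h - x))) ^ 2 - k ^ 2) x := by
  have e1 : HasDerivAt (fun x => k * (h - x)) (k * (0 - 1)) x :=
    ((hasDerivAt_const x h).sub (hasDerivAt_id x)).const_mul k
  have hc := Real.cosh_pos (k * (h - x))
  have := ((e1.sinh.div e1.cosh hc.ne').const_mul k)
  simp only [Real.tanh_eq_sinh_div_cosh]
  refine this.congr_deriv ?_
  have h2 := Real.cosh_sq (k * (h - x))
  generalize k * (h - x) = t at *
  field_simp
  ring

lemma aux_core (h a b k : ℝ) (hh : 0 < h) (ha : 0 < a) (hb : 0 < b) (hk : 0 < k) (hka : k * a ≤ π)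
    (hkb : k * b ≤ π) (u ux uy uz : ℝ → ℝ → ℝ → ℝ)
    (hu : Continuous fun p : ℝ × ℝ × ℝ => u p.1 p.2.1 p.2.2)
    (hux : Continuous fun p : ℝ × ℝ × ℝ => ux p.1 p.2.1 p.2.2)
    (huy : Continuous fun p : ℝ × ℝ × ℝ => uy p.1 p.2.1 p.2.2)
    (huz : Continuous fun p : ℝ × ℝ × ℝ => uz p.1 p.2.1 p.2.2)
    (hdx : ∀ x y z, HasDerivAt (fun x => u x y z) (ux x y z) x)
    (hdy : ∀ x y z, HasDerivAt (fun y => u x y z) (uy x y z) y)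
    (hdz : ∀ x y z, HasDerivAt (fun z => u x y z) (uz x y z) z)
    (h0 : auxI2 a b (u 0) = 0) :
    k * Real.tanh (k * h) * auxI2 a b (fun y z => u 0 y z ^ 2) ≤
      ∫ x in (0:ℝ)..h, auxI2 a b (fun y z => ux x y z ^ 2 + uy x y z ^ 2 + uz x y z ^ 2) := by
  set φ : ℝ → ℝ := fun x => k * Real.tanh (k * (h - x)) with hφ
  have hφd : ∀ x, HasDerivAt φ (φ x ^ 2 - k ^ 2) x := aux_tanh k h
  have hφc : Continuous φ := continuous_iff_continuousAt.2 fun x => (hφd x).continuousAt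
  set M : ℝ → ℝ := fun x => auxI2 a b (u x) with hM
  set M' : ℝ → ℝ := fun x => auxI2 a b (ux x) with hM'
  set S : ℝ → ℝ := fun x => auxI2 a b (fun y z => u x y z ^ 2) with hS
  set S' : ℝ → ℝ := fun x => auxI2 a b (fun y z => u x y z * ux x y z) with hS'
  set T : ℝ → ℝ := fun x => auxI2 a b (fun y z => ux x y z ^ 2) with hT
  have hMd : ∀ x, HasDerivAt M (M' x) x := auxI2_deriv a b u ux hu hux hdx
  have hSd : ∀ x, HasDerivAt S (2 * S' x) x := by
    intro x
    have := auxI2_deriv a b (fun x y z => u x y z ^ 2) (fun x y z => 2 * (u x y z * ux x y z))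
      (by fun_prop) (by fun_prop) (fun x y z => ((hdx x y z).pow 2).congr_deriv (by simp; ring)) x
    rwa [auxI2_smul] at this
  have hMc : Continuous M := continuous_iff_continuousAt.2 fun x => (hMd x).continuousAt
  have hSc : Continuous S := continuous_iff_continuousAt.2 fun x => (hSd x).continuousAt
  have hMc' : Continuous M' := by rw [hM']; unfold auxI2; fun_prop
  have hSc' : Continuous S' := by rw [hS']; unfold auxI2; fun_prop
  have hEd : ∀ x, HasDerivAt (fun x => -(φ x * (S x - M x ^ 2 / (a * b))))
      (-((φ x ^ 2 - k ^ 2) * (S x - M x ^ 2 / (a * b)) +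
        φ x * (2 * S' x - 2 * M x * M' x / (a * b)))) x := by
    intro x
    refine ((hφd x).mul ((hSd x).sub (((hMd x).pow 2).div_const (a * b)))).neg.congr_deriv ?_
    simp
  have hint : Continuous (fun x => (-((φ x ^ 2 - k ^ 2) * (S x - M x ^ 2 / (a * b)) +
        φ x * (2 * S' x - 2 * M x * M' x / (a * b))))) := by fun_prop
  have hFTC := intervalIntegral.integral_eq_sub_of_hasDerivAt (a := 0) (b := h)
    (fun x _ => hEd x) (hint.intervalIntegrable _ _)
  have hφh : φ h = 0 := by simp [hφ]
  have hM0 : M 0 = 0 := h0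
  rw [hφh, hM0] at hFTC
  have hφ0 : φ 0 = k * Real.tanh (k * h) := by simp [hφ]
  have : k * Real.tanh (k * h) * auxI2 a b (fun y z => u 0 y z ^ 2) = φ 0 * S 0 := by rw [hφ0]
  rw [this]
  have : φ 0 * S 0 = -(0 * (S h - M h ^ 2 / (a * b))) - -(φ 0 * (S 0 - 0 ^ 2 / (a * b))) := by simp
  rw [this, ← hFTC]
  apply intervalIntegral.integral_mono_on hh.le (hint.intervalIntegrable _ _)
  · apply Continuous.intervalIntegrable; unfold auxI2; fun_prop
  intro x _
  have hp := auxI2_poincare a b k ha hb hk hka hkb (u x) (uy x) (uz x) (by fun_prop) (by fun_prop)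
    (by fun_prop) (hdy x) (hdz x)
  rw [auxI2_add _ _ _ _ (by fun_prop) (by fun_prop), auxI2_add _ _ _ _ (by fun_prop) (by fun_prop)]
  have hq := auxI2_nonneg a b ha.le hb.le
    (fun y z => (ux x y z + φ x * (u x y z - M x / (a * b))) ^ 2) (fun y z => sq_nonneg _)
  have e : (fun y z => (ux x y z + φ x * (u x y z - M x / (a * b))) ^ 2) = fun y z =>
      ux x y z ^ 2 + ((φ x ^ 2) * u x y z ^ 2 + ((2 * φ x) * (u x y z * ux x y z) +
      ((-2 * φ x * (M x / (a * b))) * ux x y z + ((-2 * φ x ^ 2 * (M x / (a * b))) * u x y z +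
        (φ x * (M x / (a * b))) ^ 2)))) := by
    funext y z; ring
  rw [e, auxI2_add _ _ _ _ (by fun_prop) (by fun_prop), auxI2_add _ _ _ _ (by fun_prop) (by fun_prop),
    auxI2_add _ _ _ _ (by fun_prop) (by fun_prop), auxI2_add _ _ _ _ (by fun_prop) (by fun_prop),
    auxI2_add _ _ _ _ (by fun_prop) (by fun_prop), auxI2_smul, auxI2_smul, auxI2_smul, auxI2_smul,
    auxI2_const] at hq
  change k ^ 2 * (S x - M x ^ 2 / (a * b)) ≤ _ at hp
  change 0 ≤ T x + (φ x ^ 2 * S x + (2 * φ x * S' x + (-2 * φ x * (M x / (a * b)) * M' x +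
    (-2 * φ x ^ 2 * (M x / (a * b)) * M x + (φ x * (M x / (a * b))) ^ 2 * (a * b))))) at hq
  change _ ≤ T x + _ + _
  have e2 : (φ x * (M x / (a * b))) ^ 2 * (a * b) = φ x ^ 2 * (M x ^ 2 / (a * b)) := by
    field_simp
  have e3 : -2 * φ x * (M x / (a * b)) * M' x = - (φ x * (2 * M x * M' x / (a * b))) := by
    ring
  have e4 : -2 * φ x ^ 2 * (M x / (a * b)) * M x = - 2 * (φ x ^ 2 * (M x ^ 2 / (a * b))) := by
    ring
  rw [e2, e3, e4] at hq
  nlinarith [hp, hq]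

lemma aux_face (a b : ℝ) (ha : 0 < a) (hb : 0 < b) (f : ℝ → ℝ → ℝ)
    (hf : Continuous fun p : ℝ × ℝ => f p.1 p.2) :
    (∫ p in Set.Ioo (0:ℝ) a ×ˢ Set.Ioo (0:ℝ) b, f p.1 p.2) = auxI2 a b f := by
  have hi : IntegrableOn (fun p : ℝ × ℝ => f p.1 p.2) (Set.Ioo (0:ℝ) a ×ˢ Set.Ioo (0:ℝ) b)
      (volume.prod volume) := by
    apply IntegrableOn.mono_set (t := Set.Icc (0:ℝ) a ×ˢ Set.Icc (0:ℝ) b)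
    · exact hf.continuousOn.integrableOn_compact (isCompact_Icc.prod isCompact_Icc)
    · exact Set.prod_mono Set.Ioo_subset_Icc_self Set.Ioo_subset_Icc_self
  rw [Measure.volume_eq_prod, setIntegral_prod _ hi]
  unfold auxI2
  rw [intervalIntegral.integral_of_le ha.le, integral_Ioc_eq_integral_Ioo]
  congr 1; funext y
  rw [intervalIntegral.integral_of_le hb.le, integral_Ioc_eq_integral_Ioo]

lemma aux_box (h a b : ℝ) (hh : 0 < h) (ha : 0 < a) (hb : 0 < b)
    (F : EuclideanSpace ℝ (Fin 3) → ℝ) (hF : Continuous F) :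
    (∫ x in {x : EuclideanSpace ℝ (Fin 3) |
            x 0 ∈ Set.Ioo 0 h ∧ x 1 ∈ Set.Ioo 0 a ∧ x 2 ∈ Set.Ioo 0 b}, F x) =
      ∫ x in (0:ℝ)..h, auxI2 a b (fun y z => F !₂[x, y, z]) := by
  have mp1 := (EuclideanSpace.volume_preserving_symm_measurableEquiv_toLp (Fin 3)).symm
  have mp2 := (volume_preserving_piFinSuccAbove (fun _ : Fin 3 => ℝ) 0).symm
  have mp3 : MeasurePreserving (Prod.map id (MeasurableEquiv.finTwoArrow (α := ℝ)).symm)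
      (volume : Measure (ℝ × ℝ × ℝ)) (volume : Measure (ℝ × (Fin 2 → ℝ))) :=
    (MeasurePreserving.id volume).prod (volume_preserving_finTwoArrow ℝ).symm
  have hG : (fun p : ℝ × ℝ × ℝ => (!₂[p.1, p.2.1, p.2.2] : EuclideanSpace ℝ (Fin 3))) =
    (MeasurableEquiv.toLp 2 (Fin 3 → ℝ)) ∘ (MeasurableEquiv.piFinSuccAbove (fun _ : Fin 3 => ℝ) 0).symm ∘
    (Prod.map id (MeasurableEquiv.finTwoArrow (α := ℝ)).symm) := by
    funext p
    ext i
    fin_cases i <;> rfl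
  have mp : MeasurePreserving
      (fun p : ℝ × ℝ × ℝ => (!₂[p.1, p.2.1, p.2.2] : EuclideanSpace ℝ (Fin 3))) volume volume := by
    rw [hG]
    exact mp1.comp (mp2.comp mp3)
  have me : MeasurableEmbedding
      (fun p : ℝ × ℝ × ℝ => (!₂[p.1, p.2.1, p.2.2] : EuclideanSpace ℝ (Fin 3))) := by
    rw [hG]
    refine (MeasurableEquiv.measurableEmbedding _).comp
      ((MeasurableEquiv.measurableEmbedding _).comp ?_)
    exact MeasurableEquiv.measurableEmbedding
      ((MeasurableEquiv.refl ℝ).prodCongr (MeasurableEquiv.finTwoArrow (α := ℝ)).symm)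
  rw [← mp.setIntegral_preimage_emb me]
  have hset : (fun p : ℝ × ℝ × ℝ => (!₂[p.1, p.2.1, p.2.2] : EuclideanSpace ℝ (Fin 3))) ⁻¹'
      {x : EuclideanSpace ℝ (Fin 3) |
            x 0 ∈ Set.Ioo 0 h ∧ x 1 ∈ Set.Ioo 0 a ∧ x 2 ∈ Set.Ioo 0 b} =
      Set.Ioo 0 h ×ˢ (Set.Ioo 0 a ×ˢ Set.Ioo 0 b) := by
    ext p
    simp
  rw [hset]
  have hGc : Continuous
      (fun p : ℝ × ℝ × ℝ => (!₂[p.1, p.2.1, p.2.2] : EuclideanSpace ℝ (Fin 3))) := by fun_prop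
  have hFG : Continuous (fun p : ℝ × ℝ × ℝ => F !₂[p.1, p.2.1, p.2.2]) := hF.comp hGc
  have hi : IntegrableOn (fun p : ℝ × ℝ × ℝ => F !₂[p.1, p.2.1, p.2.2])
      (Set.Ioo 0 h ×ˢ (Set.Ioo 0 a ×ˢ Set.Ioo 0 b)) (volume.prod volume) := by
    apply IntegrableOn.mono_set (t := Set.Icc 0 h ×ˢ (Set.Icc (0:ℝ) a ×ˢ Set.Icc (0:ℝ) b))
    · exact hFG.continuousOn.integrableOn_compact
        (isCompact_Icc.prod (isCompact_Icc.prod isCompact_Icc))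
    · exact Set.prod_mono Set.Ioo_subset_Icc_self
        (Set.prod_mono Set.Ioo_subset_Icc_self Set.Ioo_subset_Icc_self)
  rw [Measure.volume_eq_prod, setIntegral_prod _ hi,
    intervalIntegral.integral_of_le hh.le, integral_Ioc_eq_integral_Ioo]
  congr 1; funext x
  exact aux_face a b ha hb (fun y z => F !₂[x, y, z]) (by fun_prop)

lemma aux_grad (w : EuclideanSpace ℝ (Fin 3) → ℝ) (x : EuclideanSpace ℝ (Fin 3)) :
    ‖gradient w x‖ ^ 2 = (fderiv ℝ w x !₂[1, 0, 0]) ^ 2 + (fderiv ℝ w x !₂[0, 1, 0]) ^ 2 +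
      (fderiv ℝ w x !₂[0, 0, 1]) ^ 2 := by
  rw [EuclideanSpace.real_norm_sq_eq, Fin.sum_univ_three]
  simp only [← inner_gradient_left, PiLp.inner_apply, Fin.sum_univ_three]
  simp

lemma aux_dx (w : EuclideanSpace ℝ (Fin 3) → ℝ) (hw : ContDiff ℝ 1 w) (x y z : ℝ) :
    HasDerivAt (fun x => w !₂[x, y, z]) (fderiv ℝ w !₂[x, y, z] !₂[1, 0, 0]) x := by
  have h1 : HasDerivAt (fun x => (!₂[x, y, z] : EuclideanSpace ℝ (Fin 3))) !₂[1, 0, 0] x := by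
    refine ((PiLp.continuousLinearEquiv 2 ℝ (fun _ : Fin 3 => ℝ)).symm.hasFDerivAt).comp_hasDerivAt _
      (hasDerivAt_pi.2 fun i => ?_)
    fin_cases i
    · exact hasDerivAt_id x
    · exact hasDerivAt_const x y
    · exact hasDerivAt_const x z
  exact ((hw.differentiable one_ne_zero _).hasFDerivAt).comp_hasDerivAt x h1

lemma aux_dy (w : EuclideanSpace ℝ (Fin 3) → ℝ) (hw : ContDiff ℝ 1 w) (x y z : ℝ) :
    HasDerivAt (fun y => w !₂[x, y, z]) (fderiv ℝ w !₂[x, y, z] !₂[0, 1, 0]) y := by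
  have h1 : HasDerivAt (fun y => (!₂[x, y, z] : EuclideanSpace ℝ (Fin 3))) !₂[0, 1, 0] y := by
    refine ((PiLp.continuousLinearEquiv 2 ℝ (fun _ : Fin 3 => ℝ)).symm.hasFDerivAt).comp_hasDerivAt _
      (hasDerivAt_pi.2 fun i => ?_)
    fin_cases i
    · exact hasDerivAt_const y x
    · exact hasDerivAt_id y
    · exact hasDerivAt_const y z
  exact ((hw.differentiable one_ne_zero _).hasFDerivAt).comp_hasDerivAt y h1

lemma aux_dz (w : EuclideanSpace ℝ (Fin 3) → ℝ) (hw : ContDiff ℝ 1 w) (x y z : ℝ) :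
    HasDerivAt (fun z => w !₂[x, y, z]) (fderiv ℝ w !₂[x, y, z] !₂[0, 0, 1]) z := by
  have h1 : HasDerivAt (fun z => (!₂[x, y, z] : EuclideanSpace ℝ (Fin 3))) !₂[0, 0, 1] z := by
    refine ((PiLp.continuousLinearEquiv 2 ℝ (fun _ : Fin 3 => ℝ)).symm.hasFDerivAt).comp_hasDerivAt _
      (hasDerivAt_pi.2 fun i => ?_)
    fin_cases i
    · exact hasDerivAt_const z x
    · exact hasDerivAt_const z y
    · exact hasDerivAt_id z
  exact ((hw.differentiable one_ne_zero _).hasFDerivAt).comp_hasDerivAt z h1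

lemma aux_cont (w : EuclideanSpace ℝ (Fin 3) → ℝ) (hw : ContDiff ℝ 1 w)
    (v : EuclideanSpace ℝ (Fin 3)) : Continuous fun x => fderiv ℝ w x v :=
  (hw.continuous_fderiv one_ne_zero).clm_apply continuous_const

lemma aux_box_grad (h a b : ℝ) (hh : 0 < h) (ha : 0 < a) (hb : 0 < b)
    (w : EuclideanSpace ℝ (Fin 3) → ℝ) (hw : ContDiff ℝ 1 w) :
    (∫ x in {x : EuclideanSpace ℝ (Fin 3) |
            x 0 ∈ Set.Ioo 0 h ∧ x 1 ∈ Set.Ioo 0 a ∧ x 2 ∈ Set.Ioo 0 b}, ‖gradient w x‖ ^ 2) =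
      ∫ x in (0:ℝ)..h, auxI2 a b (fun y z => (fderiv ℝ w !₂[x, y, z] !₂[1, 0, 0]) ^ 2 +
        (fderiv ℝ w !₂[x, y, z] !₂[0, 1, 0]) ^ 2 + (fderiv ℝ w !₂[x, y, z] !₂[0, 0, 1]) ^ 2) := by
  simp only [aux_grad]
  have c1 := aux_cont w hw
  exact aux_box h a b hh ha hb _ ((((c1 _).pow 2).add ((c1 _).pow 2)).add ((c1 _).pow 2))

lemma aux_sharp (h a b k A : ℝ) (hh : 0 < h) (ha : 0 < a) (hb : 0 < b) (hk : 0 < k) (hA : 0 < A)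
    (w : EuclideanSpace ℝ (Fin 3) → ℝ) (hw : ContDiff ℝ 1 w) (c cy cz : ℝ → ℝ → ℝ)
    (hwc : ∀ x y z, w !₂[x, y, z] = Real.cosh (k * (h - x)) * c y z)
    (hc : Continuous fun p : ℝ × ℝ => c p.1 p.2)
    (hcy : Continuous fun p : ℝ × ℝ => cy p.1 p.2)
    (hcz : Continuous fun p : ℝ × ℝ => cz p.1 p.2)
    (hdy : ∀ y z, HasDerivAt (fun y => c y z) (cy y z) y)
    (hdz : ∀ y z, HasDerivAt (fun z => c y z) (cz y z) z)
    (h0 : auxI2 a b c = 0) (h1 : auxI2 a b (fun y z => c y z ^ 2) = A)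
    (h2 : auxI2 a b (fun y z => cy y z ^ 2 + cz y z ^ 2) = k ^ 2 * A)
    (C : ℝ) (hC : (∫ p in Set.Ioo (0:ℝ) a ×ˢ Set.Ioo (0:ℝ) b, w !₂[0, p.1, p.2]) = 0 →
        Real.sqrt (∫ p in Set.Ioo (0:ℝ) a ×ˢ Set.Ioo (0:ℝ) b,
            (w !₂[0, p.1, p.2]) ^ 2) ≤
          C * Real.sqrt (∫ x in {x : EuclideanSpace ℝ (Fin 3) |
            x 0 ∈ Set.Ioo 0 h ∧ x 1 ∈ Set.Ioo 0 a ∧ x 2 ∈ Set.Ioo 0 b},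
            ‖gradient w x‖ ^ 2)) :
    1 / Real.sqrt (k * Real.tanh (k * h)) ≤ C := by
  have e1 : ∀ x : ℝ, HasDerivAt (fun x => k * (h - x)) (k * (0 - 1)) x := fun x =>
    ((hasDerivAt_const x h).sub (hasDerivAt_id x)).const_mul k
  have fx : ∀ x y z, fderiv ℝ w !₂[x, y, z] !₂[1, 0, 0] = -k * Real.sinh (k * (h - x)) * c y z := by
    intro x y z
    have := aux_dx w hw x y z
    simp only [hwc] at this
    refine this.unique (((e1 x).cosh.mul_const (c y z)).congr_deriv ?_)
    ring
  have fy : ∀ x y z, fderiv ℝ w !₂[x, y, z] !₂[0, 1, 0] = Real.cosh (k * (h - x)) * cy y z := by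
    intro x y z
    have := aux_dy w hw x y z
    simp only [hwc] at this
    exact this.unique ((hdy y z).const_mul _)
  have fz : ∀ x y z, fderiv ℝ w !₂[x, y, z] !₂[0, 0, 1] = Real.cosh (k * (h - x)) * cz y z := by
    intro x y z
    have := aux_dz w hw x y z
    simp only [hwc] at this
    exact this.unique ((hdz y z).const_mul _)
  rw [aux_box_grad h a b hh ha hb w hw] at hC
  simp only [hwc, fx, fy, fz] at hC
  rw [aux_face a b ha hb (fun y z => Real.cosh (k * (h - 0)) * c y z) (by fun_prop),
    aux_face a b ha hb (fun y z => (Real.cosh (k * (h - 0)) * c y z) ^ 2) (by fun_prop),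
    auxI2_smul, h0] at hC
  have hN : auxI2 a b (fun y z => (Real.cosh (k * (h - 0)) * c y z) ^ 2) =
      Real.cosh (k * h) ^ 2 * A := by
    simp only [mul_pow, auxI2_smul, h1, sub_zero]
  have hI : ∀ x, auxI2 a b (fun y z => (-k * Real.sinh (k * (h - x)) * c y z) ^ 2 +
      (Real.cosh (k * (h - x)) * cy y z) ^ 2 + (Real.cosh (k * (h - x)) * cz y z) ^ 2) =
      (k ^ 2 * A) * (Real.cosh (k * (h - x)) ^ 2 + Real.sinh (k * (h - x)) ^ 2) := by
    intro x
    have : (fun y z => (-k * Real.sinh (k * (h - x)) * c y z) ^ 2 +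
      (Real.cosh (k * (h - x)) * cy y z) ^ 2 + (Real.cosh (k * (h - x)) * cz y z) ^ 2) =
      fun y z => (k ^ 2 * Real.sinh (k * (h - x)) ^ 2) * c y z ^ 2 +
        Real.cosh (k * (h - x)) ^ 2 * (cy y z ^ 2 + cz y z ^ 2) := by
      funext y z; ring
    rw [this, auxI2_add _ _ _ _ (by fun_prop) (by fun_prop), auxI2_smul, auxI2_smul, h1, h2]
    ring
  have hD : (∫ x in (0:ℝ)..h, (k ^ 2 * A) *
      (Real.cosh (k * (h - x)) ^ 2 + Real.sinh (k * (h - x)) ^ 2)) =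
      k * Real.tanh (k * h) * (Real.cosh (k * h) ^ 2 * A) := by
    have hd : ∀ x ∈ Set.uIcc 0 h, HasDerivAt
        (fun x => (-k * A) * (Real.sinh (k * (h - x)) * Real.cosh (k * (h - x))))
        ((k ^ 2 * A) * (Real.cosh (k * (h - x)) ^ 2 + Real.sinh (k * (h - x)) ^ 2)) x := by
      intro x _
      refine (((e1 x).sinh.mul (e1 x).cosh).const_mul (-k * A)).congr_deriv ?_
      ring
    rw [intervalIntegral.integral_eq_sub_of_hasDerivAt hd
      (Continuous.intervalIntegrable (by fun_prop) _ _), Real.tanh_eq_sinh_div_cosh]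
    have := Real.cosh_pos (k * h)
    simp
    field_simp
  rw [hN] at hC
  simp only [hI] at hC
  rw [hD] at hC
  have hC := hC (by simp)
  have hNp : 0 < Real.cosh (k * h) ^ 2 * A := by have := Real.cosh_pos (k * h); positivity
  have ht : 0 < k * Real.tanh (k * h) := by
    rw [Real.tanh_eq_sinh_div_cosh]
    have := Real.cosh_pos (k * h)
    have := Real.sinh_pos_iff.2 (mul_pos hk hh)
    positivity
  rw [Real.sqrt_mul ht.le, ← mul_assoc] at hC
  have hs := Real.sqrt_pos.2 hNp
  rw [div_le_iff₀ (Real.sqrt_pos.2 ht)]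
  by_contra hcon
  push Not at hcon
  nlinarith

lemma aux_trig (m : ℝ) (hm : 0 < m) :
    (∫ y in (0:ℝ)..m, Real.cos (π / m * y)) = 0 ∧
    (∫ y in (0:ℝ)..m, Real.cos (π / m * y) ^ 2) = m / 2 ∧
    (∫ y in (0:ℝ)..m, Real.sin (π / m * y) ^ 2) = m / 2 := by
  have hk : π / m ≠ 0 := by positivity
  have hkm : π / m * m = π := by field_simp
  refine ⟨?_, ?_, ?_⟩
  · rw [intervalIntegral.integral_comp_mul_left (fun y => Real.cos y) hk, hkm]
    simp
  · rw [intervalIntegral.integral_comp_mul_left (fun y => Real.cos y ^ 2) hk, hkm, integral_cos_sq]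
    simp; field_simp
  · rw [intervalIntegral.integral_comp_mul_left (fun y => Real.sin y ^ 2) hk, hkm, integral_sin_sq]
    simp; field_simp



/-- The sharp constant `C₂(Ω,Γ)` in `‖w‖_{L²(Γ)} ≤ C₂ ‖∇w‖_{L²(Ω)}` for functions
with zero mean trace on `Γ`, where `Ω = (0,h₁) × (0,h₂) × (0,h₃)` and
`Γ = ∂Ω ∩ {x₁ = 0}` is one face of the parallelepiped, equals
`((π/m)·tanh(π h₁/m))^(-1/2)` with `m = max {h₂, h₃}`. -/
theorem box_one_face_C2 (h₁ h₂ h₃ : ℝ) (hh₁ : 0 < h₁) (hh₂ : 0 < h₂) (hh₃ : 0 < h₃) :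
    IsLeast {C : ℝ |
      ∀ w : EuclideanSpace ℝ (Fin 3) → ℝ, ContDiff ℝ 1 w →
        (∫ p in Set.Ioo (0:ℝ) h₂ ×ˢ Set.Ioo (0:ℝ) h₃, w !₂[0, p.1, p.2]) = 0 →
        Real.sqrt (∫ p in Set.Ioo (0:ℝ) h₂ ×ˢ Set.Ioo (0:ℝ) h₃,
            (w !₂[0, p.1, p.2]) ^ 2) ≤
          C * Real.sqrt (∫ x in {x : EuclideanSpace ℝ (Fin 3) |
            x 0 ∈ Set.Ioo 0 h₁ ∧ x 1 ∈ Set.Ioo 0 h₂ ∧ x 2 ∈ Set.Ioo 0 h₃},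
            ‖gradient w x‖ ^ 2)}
      (1 / Real.sqrt ((π / max h₂ h₃) * Real.tanh (π * h₁ / max h₂ h₃))) := by
  set m := max h₂ h₃ with hm
  have hm0 : 0 < m := lt_max_of_lt_left hh₂
  have hk : 0 < π / m := by positivity
  rw [show π * h₁ / m = π / m * h₁ by ring]
  have ht : 0 < π / m * Real.tanh (π / m * h₁) := by
    rw [Real.tanh_eq_sinh_div_cosh]
    have := Real.cosh_pos (π / m * h₁)
    have := Real.sinh_pos_iff.2 (mul_pos hk hh₁)
    positivity
  constructor
  · intro w hw h0
    rw [aux_box_grad h₁ h₂ h₃ hh₁ hh₂ hh₃ w hw]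
    have hwc := hw.continuous
    have c1 := aux_cont w hw
    have hGc : Continuous
      (fun p : ℝ × ℝ × ℝ => (!₂[p.1, p.2.1, p.2.2] : EuclideanSpace ℝ (Fin 3))) := by fun_prop
    rw [aux_face h₂ h₃ hh₂ hh₃ (fun y z => w !₂[0, y, z]) (by fun_prop)] at h0
    rw [aux_face h₂ h₃ hh₂ hh₃ (fun y z => w !₂[0, y, z] ^ 2) (by fun_prop)]
    have key := aux_core h₁ h₂ h₃ (π / m) hh₁ hh₂ hh₃ hk
      (by rw [div_mul_eq_mul_div, div_le_iff₀ hm0]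
          exact mul_le_mul_of_nonneg_left (le_max_left _ _) pi_pos.le)
      (by rw [div_mul_eq_mul_div, div_le_iff₀ hm0]
          exact mul_le_mul_of_nonneg_left (le_max_right _ _) pi_pos.le)
      (fun x y z => w !₂[x, y, z])
      (fun x y z => fderiv ℝ w !₂[x, y, z] !₂[1, 0, 0])
      (fun x y z => fderiv ℝ w !₂[x, y, z] !₂[0, 1, 0])
      (fun x y z => fderiv ℝ w !₂[x, y, z] !₂[0, 0, 1])
      (hwc.comp hGc) ((c1 _).comp hGc) ((c1 _).comp hGc) ((c1 _).comp hGc)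
      (aux_dx w hw) (aux_dy w hw) (aux_dz w hw) h0
    have := Real.sqrt_le_sqrt key
    rw [Real.sqrt_mul ht.le] at this
    rw [one_div, inv_mul_eq_div, le_div_iff₀ (Real.sqrt_pos.2 ht)]
    linarith
  · intro C hC
    have hcosd : ∀ y : ℝ, HasDerivAt (fun y => Real.cos (π / m * y))
        (-(π / m) * Real.sin (π / m * y)) y := by
      intro y
      have e1 : HasDerivAt (fun y : ℝ => π / m * y) (π / m * 1) y :=
        (hasDerivAt_id y).const_mul _
      exact e1.cos.congr_deriv (by ring)
    obtain ⟨t1, t2, t3⟩ := aux_trig m hm0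
    rcases le_total h₃ h₂ with hle | hle
    · have hm2 : m = h₂ := max_eq_left hle
      have hw : ContDiff ℝ 1 (fun x : EuclideanSpace ℝ (Fin 3) =>
        Real.cosh (π / m * (h₁ - x 0)) * Real.cos (π / m * x 1)) := by
        have := Real.contDiff_cosh (n := 1)
        fun_prop
      refine aux_sharp h₁ h₂ h₃ (π / m) (h₂ / 2 * h₃) hh₁ hh₂ hh₃ hk (by positivity) _ hw
        (fun y z => Real.cos (π / m * y)) (fun y z => -(π / m) * Real.sin (π / m * y))
        (fun y z => 0) ?_ (by fun_prop) (by fun_prop) (by fun_prop) (fun y z => hcosd y)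
        (fun y z => hasDerivAt_const _ _) ?_ ?_ ?_ C (hC _ hw)
      · intro x y z; simp
      all_goals
        rw [hm2] at t1 t2 t3 ⊢
        unfold auxI2
        simp [mul_pow, t1, t2, t3]
      all_goals ring_nf
      all_goals simp
    · have hm2 : m = h₃ := max_eq_right hle
      have hw : ContDiff ℝ 1 (fun x : EuclideanSpace ℝ (Fin 3) =>
        Real.cosh (π / m * (h₁ - x 0)) * Real.cos (π / m * x 2)) := by
        have := Real.contDiff_cosh (n := 1)
        fun_prop
      refine aux_sharp h₁ h₂ h₃ (π / m) (h₃ / 2 * h₂) hh₁ hh₂ hh₃ hk (by positivity) _ hw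
        (fun y z => Real.cos (π / m * z)) (fun y z => 0)
        (fun y z => -(π / m) * Real.sin (π / m * z)) ?_ (by fun_prop) (by fun_prop) (by fun_prop)
        (fun y z => hasDerivAt_const _ _) (fun y z => hcosd z) ?_ ?_ ?_ C (hC _ hw)
      · intro x y z; simp
      all_goals
        rw [hm2] at t1 t2 t3 ⊢
        unfold auxI2
        simp [mul_pow, t1, t2, t3]
      all_goals ring_nf
      all_goals simp
end
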